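/- arXiv:2505.11469 — 5 statements merged into one kernel-verified Lean document; each statement's English description precedes it below -/
import Mathlib

section
/- For every integer ℓ ≥ 2 and every real x > 0, as n → ∞, ln H_{ℓ,n}(x) ~ (ℓ/(ℓ−1)) · (x·K_ℓ)^{1/ℓ} · n^{(ℓ−1)/ℓ}, i.e. the ratio of the two sides tends to 1. -/
open Filter Topology Real MeasureTheory Asymptotics

noncomputable section

/-- Number of joint orbits of the subgroup generated by a tuple of permutations. -/
def kappa {ℓ n : ℕ} (σ : Fin ℓ → Equiv.Perm (Fin n)) : ℕ :=
  Nat.card (MulAction.orbitRel.Quotient (Subgroup.closure (Set.range σ)) (Fin n))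

/-- `Acount ℓ n k` is the number of commuting `ℓ`-tuples of permutations of `{1,…,n}`
with exactly `k` joint orbits. -/
def Acount (ℓ n k : ℕ) : ℕ :=
  Nat.card {σ : Fin ℓ → Equiv.Perm (Fin n) //
    (∀ i j, σ i * σ j = σ j * σ i) ∧ kappa σ = k}

/-- `Hpoly ℓ n x = (1/n!) ∑_k A(ℓ,n,k) x^k`. -/
def Hpoly (ℓ n : ℕ) (x : ℝ) : ℝ :=
  (1 / (n.factorial : ℝ)) * ∑ k ∈ Finset.range (n + 1), (Acount ℓ n k : ℝ) * x ^ k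

/-- Expectation, under the Ewens-like measure `P_{ℓ,n,x}`, of `g(K_{ℓ,n})`. -/
def expectK (ℓ n : ℕ) (x : ℝ) (g : ℕ → ℝ) : ℝ :=
  (∑ k ∈ Finset.range (n + 1), g k * (Acount ℓ n k : ℝ) * x ^ k) /
    (∑ k ∈ Finset.range (n + 1), (Acount ℓ n k : ℝ) * x ^ k)

/-- Mean of `K_{ℓ,n}` under `P_{ℓ,n,x}`. -/
def meanK (ℓ n : ℕ) (x : ℝ) : ℝ := expectK ℓ n x (fun k => (k : ℝ))

/-- Variance of `K_{ℓ,n}` under `P_{ℓ,n,x}`. -/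
def varK (ℓ n : ℕ) (x : ℝ) : ℝ :=
  expectK ℓ n x (fun k => ((k : ℝ) - meanK ℓ n x) ^ 2)

/-- Real Riemann zeta values (as a series), `zetaR s = ∑_{m ≥ 1} m^{-s}`. -/
def zetaR (s : ℝ) : ℝ := ∑' m : ℕ, 1 / ((m : ℝ) + 1) ^ s

/-- The constant `K_ℓ = (ℓ-1)! ζ(2)⋯ζ(ℓ)`. -/
def Kconst (ℓ : ℕ) : ℝ := ((ℓ - 1).factorial : ℝ) * ∏ j ∈ Finset.Icc 2 ℓ, zetaR (j : ℝ)

/-- The multiple series `Z^{[ℓ]}_{α_1,…,α_ℓ}(t)` with complex exponents. -/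
def Zc (ℓ : ℕ) (α : Fin ℓ → ℂ) (t : ℝ) : ℂ :=
  ∑' δ : Fin ℓ → ℕ+,
    (∏ i, ((δ i : ℕ) : ℂ) ^ (α i - 1)) *
      Complex.exp (-(((∏ i, ((δ i : ℕ) : ℝ)) * t : ℝ) : ℂ))

/-- The multiple series `Z^{[ℓ]}_{α_1,…,α_ℓ}(t)` with real exponents. -/
def Zr (ℓ : ℕ) (α : Fin ℓ → ℝ) (t : ℝ) : ℝ :=
  ∑' δ : Fin ℓ → ℕ+,
    (∏ i, ((δ i : ℕ) : ℝ) ^ (α i - 1)) *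
      Real.exp (-(∏ i, ((δ i : ℕ) : ℝ)) * t)

/-- The staircase series `Z_m^{[ℓ]}(t) = Z^{[ℓ]}_{m,m-1,…,m-ℓ+1}(t)`. -/
def Zstair (ℓ : ℕ) (m : ℤ) (t : ℝ) : ℝ :=
  Zr ℓ (fun i => (m : ℝ) - (i : ℕ)) t

/-- The inverse function `(Z_ℓ^{[ℓ]})^{-1} : (0,∞) → (0,∞)`. -/
def ZstairInv (ℓ : ℕ) (u : ℝ) : ℝ :=
  Function.invFunOn (Zstair ℓ ℓ) (Set.Ioi 0) u

/-- The function `q_{ℓ,n}(y,u,θ)` from the saddle point analysis. -/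
def qfun (ℓ n : ℕ) (y u θ : ℝ) : ℂ :=
  Complex.I * (n : ℂ) * (θ : ℂ) - (y : ℂ) * ∑' δ : Fin ℓ → ℕ+,
    (∏ i, ((δ i : ℕ) : ℂ) ^ ((ℓ : ℤ) - 2 - (i : ℕ))) *
      Complex.exp (-(((∏ i, ((δ i : ℕ) : ℝ)) * u : ℝ) : ℂ)) *
      (Complex.exp (Complex.I * (((∏ i, ((δ i : ℕ) : ℝ)) * θ : ℝ) : ℂ)) - 1)

/-- The normalizing sequence `b_n = ((x K_ℓ)^{1/(2ℓ)}/√(ℓ(ℓ-1))) n^{(ℓ-1)/(2ℓ)}`. -/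
def bseq (ℓ : ℕ) (x : ℝ) (n : ℕ) : ℝ :=
  (x * Kconst ℓ) ^ ((1 : ℝ) / (2 * (ℓ : ℝ))) / Real.sqrt ((ℓ : ℝ) * ((ℓ : ℝ) - 1)) *
    (n : ℝ) ^ (((ℓ : ℝ) - 1) / (2 * (ℓ : ℝ)))

/-- The sequence `x_n = x e^{s/b_n}`. -/
def xseq (ℓ : ℕ) (x s : ℝ) (n : ℕ) : ℝ := x * Real.exp (s / bseq ℓ x n)

/-- The saddle point sequence `t_n = (Z_ℓ^{[ℓ]})^{-1}(n/x)`. -/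
def tseq (ℓ : ℕ) (x : ℝ) (n : ℕ) : ℝ := ZstairInv ℓ ((n : ℝ) / x)

end

lemma aux_tdiv : Tendsto (fun t : ℝ => t / (1 - Real.exp (-t))) (𝓝[>] 0) (𝓝 1) := by
  have h : HasDerivAt (fun t : ℝ => 1 - Real.exp (-t)) 1 0 := by
    have := ((hasDerivAt_neg (0:ℝ)).exp).const_sub 1
    simpa using this
  have h2 := (hasDerivAt_iff_tendsto_slope.1 h).mono_left
    (nhdsWithin_mono (0:ℝ) (fun y (hy : y ∈ Set.Ioi (0:ℝ)) => ne_of_gt hy))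
  have h3 := h2.inv₀ one_ne_zero
  rw [inv_one] at h3
  refine h3.congr fun t => ?_
  simp [slope_def_field]

lemma base_bounds (r : ℕ) (t : ℝ) (ht : 0 < t) :
    Summable (fun n : ℕ => ((n:ℝ)+1)^r * Real.exp (-(((n:ℝ)+1) * t))) ∧
    ∑' n : ℕ, ((n:ℝ)+1)^r * Real.exp (-(((n:ℝ)+1) * t))
      ≤ Real.exp (-t) * (r.factorial / (1 - Real.exp (-t))^(r+1)) ∧
    Real.exp (-t) ^ (r+1) * (r.factorial / (1 - Real.exp (-t))^(r+1)) ≤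
      ∑' n : ℕ, ((n:ℝ)+1)^r * Real.exp (-(((n:ℝ)+1) * t)) := by
  set q := Real.exp (-t) with hq
  have hq0 : 0 < q := Real.exp_pos _
  have hq1 : q < 1 := by rw [hq, Real.exp_lt_one_iff]; linarith
  have hn : ‖q‖ < 1 := by rw [Real.norm_of_nonneg hq0.le]; exact hq1
  have hs := hasSum_choose_mul_geometric_of_norm_lt_one r hn
  have he : ∀ n : ℕ, Real.exp (-(((n:ℝ)+1) * t)) = q ^ (n+1) := by
    intro n
    rw [hq, ← Real.exp_nat_mul]; congr 1; push_cast; ring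
  simp_rw [he]
  have hs1 := hs.mul_left (q * r.factorial)
  have hs2 := hs.mul_left (q^(r+1) * r.factorial)
  have hle : ∀ n : ℕ, ((n:ℝ)+1)^r * q^(n+1) ≤ q * r.factorial * (((n+r).choose r : ℝ) * q^n) := by
    intro n
    have h1 : ((n:ℝ)+1)^r ≤ r.factorial * ((n+r).choose r : ℝ) := by
      have := Nat.pow_succ_le_ascFactorial (n+1) r
      rw [Nat.ascFactorial_eq_factorial_mul_choose] at this
      exact_mod_cast this
    calc _ ≤ (r.factorial * ((n+r).choose r : ℝ)) * q^(n+1) := by gcongr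
      _ = _ := by ring
  have hsum : Summable (fun n : ℕ => ((n:ℝ)+1)^r * q^(n+1)) :=
    Summable.of_nonneg_of_le (fun n => by positivity) hle hs1.summable
  refine ⟨hsum, ?_, ?_⟩
  · calc _ ≤ _ := hsum.tsum_le_tsum hle hs1.summable
      _ = _ := by rw [hs1.tsum_eq]; ring
  · have hsh := (summable_nat_add_iff r).2 hsum
    have h1 := hsum.sum_add_tsum_nat_add r
    have h0 : 0 ≤ ∑ i ∈ Finset.range r, ((i:ℝ)+1)^r * q^(i+1) :=
      Finset.sum_nonneg fun i _ => by positivity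
    have h2 : q^(r+1) * (r.factorial / (1-q)^(r+1)) ≤
        ∑' n : ℕ, (((n+r : ℕ):ℝ)+1)^r * q^(n+r+1) := by
      calc _ = ∑' n : ℕ, q^(r+1) * r.factorial * (((n+r).choose r : ℝ) * q^n) := by
              rw [hs2.tsum_eq]; ring
        _ ≤ _ := by
          refine hs2.summable.tsum_le_tsum (fun n => ?_) hsh
          have h3 : (r.factorial : ℝ) * ((n+r).choose r : ℝ) ≤ (((n+r:ℕ):ℝ)+1)^r := by
            have := Nat.descFactorial_le_pow (n+r) r
            rw [Nat.descFactorial_eq_factorial_mul_choose] at this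
            have h4 : (n+r)^r ≤ (n+r+1)^r := Nat.pow_le_pow_left (by omega) r
            exact_mod_cast this.trans h4
          calc _ = (r.factorial * ((n+r).choose r : ℝ)) * q^(n+r+1) := by ring
            _ ≤ _ := by gcongr
    linarith

/-- number of index-`m` subgroups, recursively -/
def cc : ℕ → ℕ → ℕ
  | 0, m => if m = 1 then 1 else 0
  | l+1, m => ∑ d ∈ m.divisors, d * cc l d

lemma cc_one (m : ℕ) (hm : m ≠ 0) : cc 1 m = 1 := by
  simp [cc, hm]

noncomputable def Sg (l r : ℕ) (t : ℝ) : ℝ := ∑' m : ℕ+, (m:ℝ)^r * cc l m * Real.exp (-((m:ℝ) * t))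

def Sgood (l : ℕ) (L : ℝ) : Prop := ∀ r : ℕ,
  (∀ t : ℝ, 0 < t → Summable (fun m : ℕ+ => (m:ℝ)^r * cc l m * Real.exp (-((m:ℝ) * t)))) ∧
  (∃ C : ℝ, ∀ t : ℝ, 0 < t → t^(l+r) * Sg l r t ≤ C) ∧
  Tendsto (fun t => t^(l+r) * Sg l r t) (𝓝[>] 0) (𝓝 ((l-1+r).factorial * L))

lemma Sgood_one : Sgood 1 1 := by
  intro r
  have hfun : (fun (t:ℝ) (m : ℕ+) => (m:ℝ)^r * cc 1 m * Real.exp (-((m:ℝ) * t)))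
      = fun (t:ℝ) (m : ℕ+) => (fun n : ℕ => (n:ℝ)^r * Real.exp (-((n:ℝ) * t))) (m : ℕ) := by
    funext t m
    rw [cc_one _ m.ne_zero]; simp
  have hS : ∀ t, Sg 1 r t = ∑' n : ℕ, ((n:ℝ)+1)^r * Real.exp (-(((n:ℝ)+1) * t)) := by
    intro t
    have := tsum_pnat_eq_tsum_succ (f := fun n : ℕ => (n:ℝ)^r * Real.exp (-((n:ℝ) * t)))
    rw [Sg]
    rw [congrFun hfun t, this]
    push_cast; rfl
  refine ⟨?_, ?_, ?_⟩
  · intro t ht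
    rw [congrFun hfun t]
    have := summable_pnat_iff_summable_succ (f := fun n : ℕ => (n:ℝ)^r * Real.exp (-((n:ℝ) * t)))
    rw [this]
    push_cast
    exact (base_bounds r t ht).1
  · refine ⟨r.factorial * ((r+1).factorial * Real.exp 1), fun t ht => ?_⟩
    rw [hS]
    have hq1 : Real.exp (-t) < 1 := by rw [Real.exp_lt_one_iff]; linarith
    have h1 : t / (1 - Real.exp (-t)) ≤ 1 + t := by
      rw [div_le_iff₀ (by linarith)]
      have : Real.exp (-t) * (1 + t) ≤ 1 := by
        rw [Real.exp_neg, inv_mul_le_iff₀ (Real.exp_pos _)]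
        linarith [Real.add_one_le_exp t]
      nlinarith
    have h2 := Real.pow_div_factorial_le_exp (1+t) (by linarith) (r+1)
    rw [div_le_iff₀ (by positivity), Real.exp_add] at h2
    calc _ ≤ t^(1+r) * (Real.exp (-t) * (r.factorial / (1 - Real.exp (-t))^(r+1))) := by
            gcongr; exact (base_bounds r t ht).2.1
      _ = r.factorial * Real.exp (-t) * (t / (1 - Real.exp (-t)))^(r+1) := by
            rw [div_pow]; ring
      _ ≤ r.factorial * Real.exp (-t) * (1 + t)^(r+1) := by
            have := div_nonneg ht.le (by linarith : 0 ≤ 1 - Real.exp (-t))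
            gcongr
      _ ≤ r.factorial * Real.exp (-t) * (Real.exp 1 * Real.exp t * (r+1).factorial) := by gcongr
      _ = r.factorial * ((r+1).factorial * Real.exp 1) * (Real.exp (-t) * Real.exp t) := by ring
      _ = _ := by rw [← Real.exp_add]; simp
  · have hexp : Tendsto (fun t : ℝ => Real.exp (-t)) (𝓝[>] 0) (𝓝 1) := by
      have : Continuous (fun t : ℝ => Real.exp (-t)) := by fun_prop
      have := (this.tendsto 0).mono_left (nhdsWithin_le_nhds (s := Set.Ioi 0))
      simpa using this
    have hd := (aux_tdiv.pow (r+1)).mul_const (r.factorial : ℝ)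
    have hl := (hexp.pow (r+1)).mul hd
    have hu := hexp.mul hd
    simp only [one_pow, one_mul] at hl hu
    simp only [mul_one, Nat.sub_self, zero_add]
    refine tendsto_of_tendsto_of_tendsto_of_le_of_le' hl hu ?_ ?_
    · filter_upwards [self_mem_nhdsWithin] with t ht
      rw [hS]
      calc _ = t^(1+r) * (Real.exp (-t) ^ (r+1) * (r.factorial / (1 - Real.exp (-t))^(r+1))) := by
              rw [div_pow]; ring
        _ ≤ _ := by
          have : (0:ℝ) < t := ht
          gcongr; exact (base_bounds r t ht).2.2
    · filter_upwards [self_mem_nhdsWithin] with t ht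
      rw [hS]
      calc _ ≤ t^(1+r) * (Real.exp (-t) * (r.factorial / (1 - Real.exp (-t))^(r+1))) := by
              have : (0:ℝ) < t := ht
              gcongr; exact (base_bounds r t ht).2.1
        _ = _ := by rw [div_pow]; ring

lemma Sg_nonneg (l r : ℕ) (t : ℝ) : 0 ≤ Sg l r t := tsum_nonneg fun m => by positivity

lemma zetaR_pnat (s : ℕ) : zetaR (s:ℝ) = ∑' m : ℕ+, 1 / (m:ℝ)^s := by
  have := tsum_pnat_eq_tsum_succ (f := fun n : ℕ => 1 / (n:ℝ)^s)
  rw [this, zetaR]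
  simp

lemma summable_pnat_pow (s : ℕ) (hs : 1 < s) : Summable (fun m : ℕ+ => 1 / (m:ℝ)^s) := by
  have := summable_pnat_iff_summable_nat (f := fun n : ℕ => 1 / (n:ℝ)^s)
  exact this.2 (Real.summable_one_div_nat_pow.2 hs)

lemma Sgood_succ (l : ℕ) (hl : 1 ≤ l) (L : ℝ) (h : Sgood l L) :
    Sgood (l+1) (L * zetaR ((l+1:ℕ):ℝ)) := by
  intro r
  obtain ⟨hsum, ⟨C, hC⟩, hlim⟩ := h (r+1)
  have hζ := summable_pnat_pow (l+1) (by omega)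
  have hterm : ∀ t : ℝ, ∀ e : ℕ+, t^(l+1+r) * ((e:ℝ)^r * Sg l (r+1) (e*t)) =
      1/(e:ℝ)^(l+1) * ((e*t)^(l+(r+1)) * Sg l (r+1) (e*t)) := by
    intro t e
    have he : (e:ℝ) ≠ 0 := by exact_mod_cast e.ne_zero
    rw [mul_pow, show l + (r+1) = r + (l+1) by ring, pow_add (e:ℝ)]
    field_simp
    ring
  have hbd : ∀ t : ℝ, 0 < t → ∀ e : ℕ+, t^(l+1+r) * ((e:ℝ)^r * Sg l (r+1) (e*t)) ≤
      1/(e:ℝ)^(l+1) * C := by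
    intro t ht e
    rw [hterm]
    have he : (0:ℝ) < e := by exact_mod_cast e.pos
    gcongr
    exact hC _ (by positivity)
  -- double sum
  have hF : ∀ t : ℝ, 0 < t → Summable (fun p : ℕ+ × ℕ+ =>
      ((p.1:ℝ)*p.2)^r * (p.2 * cc l p.2) * Real.exp (-(((p.1:ℝ)*p.2) * t))) ∧
      (∀ e : ℕ+, ∑' d : ℕ+, ((e:ℝ)*d)^r * (d * cc l d) * Real.exp (-(((e:ℝ)*d) * t))
        = (e:ℝ)^r * Sg l (r+1) (e*t)) ∧ Summable (fun e : ℕ+ => (e:ℝ)^r * Sg l (r+1) (e*t)) := by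
    intro t ht
    have heq : ∀ e d : ℕ+, ((e:ℝ)*d)^r * (d * cc l d) * Real.exp (-(((e:ℝ)*d) * t))
        = (e:ℝ)^r * ((d:ℝ)^(r+1) * cc l d * Real.exp (-((d:ℝ) * (e*t)))) := by
      intro e d
      rw [show ((e:ℝ)*d) * t = d * (e * t) by ring]; ring
    have hes : ∀ e : ℕ+, Summable fun d : ℕ+ => ((e:ℝ)*d)^r * (d * cc l d) * Real.exp (-(((e:ℝ)*d) * t)) := by
      intro e
      simp_rw [heq]
      have he : (0:ℝ) < e := by exact_mod_cast e.pos
      exact (hsum _ (by positivity)).mul_left _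
    have hev : ∀ e : ℕ+, ∑' d : ℕ+, ((e:ℝ)*d)^r * (d * cc l d) * Real.exp (-(((e:ℝ)*d) * t))
        = (e:ℝ)^r * Sg l (r+1) (e*t) := by
      intro e
      simp_rw [heq]
      rw [tsum_mul_left]; rfl
    have hse : Summable (fun e : ℕ+ => (e:ℝ)^r * Sg l (r+1) (e*t)) := by
      have : Summable (fun e : ℕ+ => t^(l+1+r) * ((e:ℝ)^r * Sg l (r+1) (e*t))) := by
        refine Summable.of_nonneg_of_le (fun e => ?_) (hbd t ht) (hζ.mul_right C)
        have := Sg_nonneg l (r+1) (e*t)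
        positivity
      exact (summable_mul_left_iff (by positivity)).1 this
    refine ⟨(summable_prod_of_nonneg (fun p => by positivity)).2 ⟨hes, ?_⟩, hev, hse⟩
    simp only [hev]; exact hse
  have hG : ∀ t : ℝ, 0 < t → HasSum (fun m : ℕ+ => (m:ℝ)^r * cc (l+1) m * Real.exp (-((m:ℝ) * t)))
      (∑' e : ℕ+, (e:ℝ)^r * Sg l (r+1) (e*t)) := by
    intro t ht
    obtain ⟨h1, h2, h3⟩ := hF t ht
    have h4 := h1.hasSum
    rw [h1.tsum_prod] at h4
    simp only [h2] at h4
    rw [← sigmaAntidiagonalEquivProd.hasSum_iff] at h4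
    refine h4.sigma fun m => ?_
    have hfin := hasSum_fintype (fun c : Nat.divisorsAntidiagonal m => 
      (m:ℝ)^r * (((c.1.2:ℕ):ℝ) * cc l c.1.2) * Real.exp (-((m:ℝ) * t)))
    have hval : ∑ c : Nat.divisorsAntidiagonal m, 
      (m:ℝ)^r * (((c.1.2:ℕ):ℝ) * cc l c.1.2) * Real.exp (-((m:ℝ) * t)) =
      (m:ℝ)^r * cc (l+1) m * Real.exp (-((m:ℝ) * t)) := by
      rw [Finset.sum_coe_sort (Nat.divisorsAntidiagonal m) (fun c => (m:ℝ)^r * (((c.2:ℕ):ℝ) * cc l c.2) * Real.exp (-((m:ℝ) * t)))]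
      rw [← Finset.sum_mul, ← Finset.mul_sum]
      rw [Nat.sum_divisorsAntidiagonal' (f := fun a b => ((b:ℕ):ℝ) * cc l b)]
      simp [cc]
    rw [hval] at hfin
    convert hfin using 2 with c
    have hm : c.1.1 * c.1.2 = (m:ℕ) := (Nat.mem_divisorsAntidiagonal.1 c.2).1
    have hm' : (c.1.1:ℝ) * (c.1.2:ℝ) = (m:ℝ) := by exact_mod_cast hm
    simp [sigmaAntidiagonalEquivProd, divisorsAntidiagonalFactors, hm']
  have hval : ∀ t : ℝ, 0 < t → Sg (l+1) r t = ∑' e : ℕ+, (e:ℝ)^r * Sg l (r+1) (e*t) :=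
    fun t ht => (hG t ht).tsum_eq
  have hval2 : ∀ t : ℝ, 0 < t → t^(l+1+r) * Sg (l+1) r t = 
      ∑' e : ℕ+, 1/(e:ℝ)^(l+1) * ((e*t)^(l+(r+1)) * Sg l (r+1) (e*t)) := by
    intro t ht
    rw [hval t ht, ← tsum_mul_left]
    simp_rw [hterm]
  refine ⟨fun t ht => (hG t ht).summable, ⟨∑' e : ℕ+, 1/(e:ℝ)^(l+1) * C, fun t ht => ?_⟩, ?_⟩
  · rw [hval2 t ht]
    simp_rw [← hterm]
    exact (((hF t ht).2.2).mul_left _).tsum_le_tsum (hbd t ht) (hζ.mul_right C)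
  · have hT : Tendsto (fun t : ℝ => ∑' e : ℕ+, 1/(e:ℝ)^(l+1) * ((e*t)^(l+(r+1)) * Sg l (r+1) (e*t)))
        (𝓝[>] 0) (𝓝 (∑' e : ℕ+, 1/(e:ℝ)^(l+1) * ((l-1+(r+1)).factorial * L))) := by
      refine tendsto_tsum_of_dominated_convergence (hζ.mul_right C) ?_ ?_
      · intro e
        refine Tendsto.const_mul _ (hlim.comp (f := fun t : ℝ => (e:ℝ)*t) ?_)
        have he : (0:ℝ) < e := by exact_mod_cast e.pos
        refine tendsto_nhdsWithin_iff.2 ⟨?_, ?_⟩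
        · have : Continuous (fun t : ℝ => (e:ℝ)*t) := by fun_prop
          have := (this.tendsto 0).mono_left (nhdsWithin_le_nhds (s := Set.Ioi 0))
          simpa using this
        · filter_upwards [self_mem_nhdsWithin] with t ht
          exact mul_pos he ht
      · filter_upwards [self_mem_nhdsWithin] with t ht e
        rw [← hterm, Real.norm_of_nonneg]
        · exact hbd t ht e
        · have := Sg_nonneg l (r+1) (e*t)
          have : (0:ℝ) < t := ht
          positivity
    rw [tsum_mul_right, ← zetaR_pnat] at hT
    have : zetaR ((l+1:ℕ):ℝ) * ((l-1+(r+1)).factorial * L) = 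
      ((l+1-1+r).factorial : ℝ) * (L * zetaR ((l+1:ℕ):ℝ)) := by
      rw [show l-1+(r+1) = l+1-1+r by omega]; ring
    rw [this] at hT
    refine hT.congr' ?_
    filter_upwards [self_mem_nhdsWithin] with t ht
    exact (hval2 t ht).symm

lemma Sgood_all (l : ℕ) (hl : 1 ≤ l) : Sgood l (∏ j ∈ Finset.Icc 2 l, zetaR (j:ℝ)) := by
  induction l, hl using Nat.le_induction with
  | base => simpa using Sgood_one
  | succ l hl ih =>
    rw [Finset.prod_Icc_succ_top (by omega)]
    exact Sgood_succ l hl _ ih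

def mkL {A : Type*} [AddCommGroup A] (M : AddSubgroup A) (e : ℤ) (c : A ⧸ M) : AddSubgroup (A × ℤ) where
  carrier := {p | ∃ k : ℤ, p.2 = k * e ∧ (QuotientAddGroup.mk p.1 : A ⧸ M) = k • c}
  zero_mem' := ⟨0, by simp, by simp⟩
  add_mem' := by
    rintro p q ⟨k, h1, h2⟩ ⟨k', h3, h4⟩
    refine ⟨k + k', ?_, ?_⟩
    · simp [h1, h3, add_mul]
    · simp only [Prod.fst_add, QuotientAddGroup.mk_add, h2, h4, add_smul]
  neg_mem' := by
    rintro p ⟨k, h1, h2⟩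
    refine ⟨-k, ?_, ?_⟩
    · simp [h1]
    · simp only [Prod.fst_neg, QuotientAddGroup.mk_neg, h2, neg_smul]

lemma mem_mkL {A : Type*} [AddCommGroup A] (M : AddSubgroup A) (e : ℤ) (c : A ⧸ M) (p : A × ℤ) :
    p ∈ mkL M e c ↔ ∃ k : ℤ, p.2 = k * e ∧ (QuotientAddGroup.mk p.1 : A ⧸ M) = k • c := Iff.rfl

lemma comap_mkL {A : Type*} [AddCommGroup A] (M : AddSubgroup A) (e : ℤ) (he : e ≠ 0) (c : A ⧸ M) :
    (mkL M e c).comap (AddMonoidHom.inl A ℤ) = M := by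
  ext a
  rw [AddSubgroup.mem_comap, mem_mkL]
  constructor
  · rintro ⟨k, h1, h2⟩
    have hk : k = 0 := by
      have : k * e = 0 := h1.symm
      exact (mul_eq_zero.1 this).resolve_right he
    subst hk
    rw [zero_smul] at h2
    exact (QuotientAddGroup.eq_zero_iff a).1 h2
  · intro ha
    exact ⟨0, by simp, by rw [zero_smul]; exact (QuotientAddGroup.eq_zero_iff a).2 ha⟩

lemma index_mkL {A : Type*} [AddCommGroup A] (M : AddSubgroup A) (e : ℤ) (he : e ≠ 0) (c : A ⧸ M) :
    (mkL M e c).index = M.index * e.natAbs := by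
  set L := mkL M e c
  have h1 : M.index = L.relIndex (AddMonoidHom.inl A ℤ).range := by
    rw [← AddSubgroup.index_comap, comap_mkL M e he c]
  rw [← AddSubgroup.relIndex_sup_right] at h1
  have h2 : (AddMonoidHom.inl A ℤ).range ⊔ L = (AddSubgroup.zmultiples e).comap (AddMonoidHom.snd A ℤ) := by
    apply le_antisymm
    · rw [sup_le_iff]
      constructor
      · rintro _ ⟨a, rfl⟩
        simp
      · rintro p ⟨k, h1, -⟩
        rw [AddSubgroup.mem_comap]
        exact AddSubgroup.mem_zmultiples_iff.2 ⟨k, by simp [h1]⟩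
    · intro p hp
      rw [AddSubgroup.mem_comap] at hp
      obtain ⟨k, hk⟩ := AddSubgroup.mem_zmultiples_iff.1 hp
      obtain ⟨v, rfl⟩ := QuotientAddGroup.mk_surjective c
      rw [AddSubgroup.mem_sup]
      refine ⟨(p.1 - k • v, 0), ⟨p.1 - k • v, rfl⟩, (k • v, k * e), ⟨k, rfl, rfl⟩, ?_⟩
      ext
      · simp
      · simpa using hk
  have h3 := AddSubgroup.relIndex_mul_index (H := L) (K := (AddMonoidHom.inl A ℤ).range ⊔ L) le_sup_right
  rw [← h3, ← h1, h2, AddSubgroup.index_comap_of_surjective _ (Prod.snd_surjective), Int.index_zmultiples]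

lemma exists_mkL {A : Type*} [AddCommGroup A] (L : AddSubgroup (A × ℤ)) (hL : L.index ≠ 0) :
    ∃ e : ℕ, e ≠ 0 ∧ ∃ c : A ⧸ (L.comap (AddMonoidHom.inl A ℤ)), L = mkL _ (e:ℤ) c := by
  obtain ⟨z, hz⟩ := Int.subgroup_cyclic (L.map (AddMonoidHom.snd A ℤ))
  rw [← AddSubgroup.zmultiples_eq_closure] at hz
  set e := z.natAbs with he
  have hz' : L.map (AddMonoidHom.snd A ℤ) = AddSubgroup.zmultiples (e:ℤ) := by
    rw [hz, he, Int.zmultiples_natAbs]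
  have he0 : e ≠ 0 := by
    intro h0
    have h1 : (L.map (AddMonoidHom.snd A ℤ)).index ∣ L.index := AddSubgroup.index_map_dvd _ Prod.snd_surjective
    rw [hz', Int.index_zmultiples, h0] at h1
    exact hL (Nat.eq_zero_of_zero_dvd h1)
  have hmem : (e:ℤ) ∈ L.map (AddMonoidHom.snd A ℤ) := by
    rw [hz']; exact AddSubgroup.mem_zmultiples _
  obtain ⟨⟨v, w⟩, hv, hvw⟩ := hmem
  have hw : w = e := hvw
  subst hw
  refine ⟨e, he0, QuotientAddGroup.mk v, ?_⟩
  ext ⟨a, b⟩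
  rw [mem_mkL]
  have key : ∀ k : ℤ, (a, k * (e:ℤ)) ∈ L ↔ (QuotientAddGroup.mk a : A ⧸ (L.comap (AddMonoidHom.inl A ℤ))) = k • QuotientAddGroup.mk v := by
    intro k
    have hkv := L.zsmul_mem hv k
    rw [← QuotientAddGroup.mk_zsmul, QuotientAddGroup.eq, AddSubgroup.mem_comap]
    have : (AddMonoidHom.inl A ℤ) (-a + k • v) = -(a, k * (e:ℤ)) + k • (v, (e:ℤ)) := by
      ext <;> simp
    rw [this, AddSubgroup.add_mem_cancel_right _ hkv, neg_mem_iff]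
  constructor
  · intro h
    have hb : b ∈ AddSubgroup.zmultiples (e:ℤ) := by
      rw [← hz']; exact ⟨(a,b), h, rfl⟩
    obtain ⟨k, hk⟩ := AddSubgroup.mem_zmultiples_iff.1 hb
    have hk' : b = k * e := by simpa using hk.symm
    subst hk'
    exact ⟨k, rfl, (key k).1 h⟩
  · rintro ⟨k, h1, h2⟩
    simp only at h1 h2
    subst h1
    exact (key k).2 h2

lemma sub_step {A : Type*} [AddCommGroup A]
    (hf : ∀ d : ℕ, d ≠ 0 → Finite {M : AddSubgroup A // M.index = d}) (m : ℕ) (hm : m ≠ 0) :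
    Finite {L : AddSubgroup (A × ℤ) // L.index = m} ∧
    Nat.card {L : AddSubgroup (A × ℤ) // L.index = m} = 
      ∑ d ∈ m.divisors, d * Nat.card {M : AddSubgroup A // M.index = d} := by
  let D := Σ d : m.divisors, Σ M : {M : AddSubgroup A // M.index = (d:ℕ)}, A ⧸ M.1
  have hd0 : ∀ d : m.divisors, (d:ℕ) ≠ 0 := fun d => (Nat.pos_of_mem_divisors d.2).ne'
  have hdm : ∀ d : m.divisors, (d:ℕ) * (m / d) = m := fun d => Nat.mul_div_cancel' (Nat.dvd_of_mem_divisors d.2)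
  have hq0 : ∀ d : m.divisors, m / (d:ℕ) ≠ 0 := fun d h0 => hm (by rw [← hdm d, h0, mul_zero])
  have i1 : ∀ d : m.divisors, Finite {M : AddSubgroup A // M.index = (d:ℕ)} := fun d => hf d (hd0 d)
  have i2 : ∀ (d : m.divisors) (M : {M : AddSubgroup A // M.index = (d:ℕ)}), Finite (A ⧸ M.1) := by
    intro d M
    have : M.1.FiniteIndex := ⟨by rw [M.2]; exact hd0 d⟩
    exact AddSubgroup.finite_quotient_of_finiteIndex
  let F : D → {L : AddSubgroup (A × ℤ) // L.index = m} := fun p =>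
    ⟨mkL p.2.1.1 ((m / (p.1:ℕ) : ℕ) : ℤ) p.2.2, by
      rw [index_mkL _ _ (by exact_mod_cast hq0 p.1), p.2.1.2, Int.natAbs_natCast, hdm]⟩
  have hF : Function.Bijective F := by
    constructor
    · rintro ⟨d, M, c⟩ ⟨d', M', c'⟩ h
      have h' : mkL M.1 ((m / (d:ℕ) : ℕ) : ℤ) c = mkL M'.1 ((m / (d':ℕ) : ℕ) : ℤ) c' := congrArg Subtype.val h
      have hM : M.1 = M'.1 := by
        rw [← comap_mkL M.1 ((m / (d:ℕ) : ℕ) : ℤ) (by exact_mod_cast hq0 d) c, h',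
          comap_mkL M'.1 ((m / (d':ℕ) : ℕ) : ℤ) (by exact_mod_cast hq0 d') c']
      have hdd : d = d' := by
        apply Subtype.ext
        rw [← M.2, ← M'.2, hM]
      subst hdd
      have hMM : M = M' := Subtype.ext hM
      subst hMM
      obtain ⟨v, rfl⟩ := QuotientAddGroup.mk_surjective c
      have hv : (v, ((m / (d:ℕ) : ℕ) : ℤ)) ∈ mkL M.1 ((m / (d:ℕ) : ℕ) : ℤ) (QuotientAddGroup.mk v) :=
        ⟨1, by simp, by simp⟩
      rw [h'] at hv
      obtain ⟨k, h1, h2⟩ := hv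
      have hk : k = 1 := by
        have h0 : ((m / (d:ℕ) : ℕ) : ℤ) ≠ 0 := by exact_mod_cast hq0 d
        have h1' : ((m / (d:ℕ) : ℕ) : ℤ) = k * ((m / (d:ℕ) : ℕ) : ℤ) := h1
        exact (mul_right_cancel₀ h0 (by rw [one_mul]; exact h1')).symm
      subst hk
      rw [one_smul] at h2
      simp only at h2
      rw [h2]
    · rintro ⟨L, hL⟩
      obtain ⟨e, he, c, hc⟩ := exists_mkL L (by rw [hL]; exact hm)
      have hi := index_mkL (L.comap (AddMonoidHom.inl A ℤ)) (e:ℤ) (by exact_mod_cast he) c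
      rw [← hc, hL, Int.natAbs_natCast] at hi
      generalize L.comap (AddMonoidHom.inl A ℤ) = M at c hc hi
      have hMd : M.index ∈ m.divisors := Nat.mem_divisors.2 ⟨⟨e, hi⟩, hm⟩
      refine ⟨⟨⟨M.index, hMd⟩, ⟨M, rfl⟩, c⟩, ?_⟩
      apply Subtype.ext
      have : m / M.index = e := by
        rw [hi]; exact Nat.mul_div_cancel_left _ (Nat.pos_of_mem_divisors hMd)
      simp only [F, this]
      exact hc.symm
  refine ⟨Finite.of_surjective F hF.2, ?_⟩
  rw [← Nat.card_congr (Equiv.ofBijective F hF), Nat.card_sigma]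
  rw [← Finset.sum_coe_sort m.divisors (fun d => d * Nat.card {M : AddSubgroup A // M.index = d})]
  refine Finset.sum_congr rfl fun d _ => ?_
  have := Fintype.ofFinite {M : AddSubgroup A // M.index = (d:ℕ)}
  rw [Nat.card_sigma]
  have : ∀ M : {M : AddSubgroup A // M.index = (d:ℕ)}, Nat.card (A ⧸ M.1) = d := fun M => M.2
  simp only [this]
  simp [mul_comm]

def subEquiv {A B : Type*} [AddCommGroup A] [AddCommGroup B] (e : A ≃+ B) (m : ℕ) :
    {L : AddSubgroup A // L.index = m} ≃ {L : AddSubgroup B // L.index = m} where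
  toFun L := ⟨L.1.map e.toAddMonoidHom, by
    rw [AddSubgroup.index_map_of_bijective e.bijective]; exact L.2⟩
  invFun L := ⟨L.1.map e.symm.toAddMonoidHom, by
    rw [AddSubgroup.index_map_of_bijective e.symm.bijective]; exact L.2⟩
  left_inv L := by
    apply Subtype.ext; ext x; simp [AddSubgroup.mem_map]
  right_inv L := by
    apply Subtype.ext; ext x; simp [AddSubgroup.mem_map]

def finSplit (l : ℕ) : ((Fin l → ℤ) × ℤ) ≃+ (Fin (l+1) → ℤ) where
  toFun p := Fin.cons p.2 p.1
  invFun f := (Fin.tail f, f 0)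
  left_inv p := by simp
  right_inv f := by simp
  map_add' p q := by
    funext i
    refine Fin.cases ?_ (fun i => ?_) i <;> simp

lemma sub_count (l : ℕ) : ∀ m : ℕ, m ≠ 0 → Finite {L : AddSubgroup (Fin l → ℤ) // L.index = m} ∧
    Nat.card {L : AddSubgroup (Fin l → ℤ) // L.index = m} = cc l m := by
  induction l with
  | zero =>
    intro m hm
    have hall : ∀ L : AddSubgroup (Fin 0 → ℤ), L = ⊤ := fun L => by
      ext x; rw [Subsingleton.elim x 0]; simp only [L.zero_mem, AddSubgroup.mem_top]
    have : Subsingleton {L : AddSubgroup (Fin 0 → ℤ) // L.index = m} :=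
      ⟨fun a b => Subtype.ext ((hall a.1).trans (hall b.1).symm)⟩
    refine ⟨inferInstance, ?_⟩
    rw [cc]
    split_ifs with h
    · have : Nonempty {L : AddSubgroup (Fin 0 → ℤ) // L.index = m} := ⟨⟨⊤, by simp [h]⟩⟩
      exact Nat.card_unique
    · have : IsEmpty {L : AddSubgroup (Fin 0 → ℤ) // L.index = m} := 
        ⟨fun L => h (by rw [← L.2, hall L.1]; simp)⟩
      exact Nat.card_of_isEmpty
  | succ l ih =>
    intro m hm
    obtain ⟨h1, h2⟩ := sub_step (fun d hd => (ih d hd).1) m hm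
    refine ⟨Finite.of_equiv _ (subEquiv (finSplit l) m), ?_⟩
    rw [← Nat.card_congr (subEquiv (finSplit l) m), h2, cc]
    refine Finset.sum_congr rfl fun d hd => ?_
    rw [(ih d (Nat.pos_of_mem_divisors hd).ne').2]

lemma sub_count_mul (l : ℕ) (m : ℕ) (hm : m ≠ 0) :
    Finite {H : Subgroup (Multiplicative (Fin l → ℤ)) // H.index = m} ∧
    Nat.card {H : Subgroup (Multiplicative (Fin l → ℤ)) // H.index = m} = cc l m := by
  obtain ⟨h1, h2⟩ := sub_count l m hm
  have e : {L : AddSubgroup (Fin l → ℤ) // L.index = m} ≃ 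
      {H : Subgroup (Multiplicative (Fin l → ℤ)) // H.index = m} :=
    Equiv.subtypeEquiv AddSubgroup.toSubgroup.toEquiv (fun L => by
      have : (AddSubgroup.toSubgroup L).index = L.index := rfl
      simp [this])
  exact ⟨Finite.of_equiv _ e, by rw [← Nat.card_congr e, h2]⟩

lemma bern (a k s : ℝ) (ha0 : 0 ≤ a) (ha1 : a ≤ 1) (hk : 0 < k) (hs : 0 ≤ k + s) :
    (k + s) ^ a ≤ k ^ a + a * k ^ (a - 1) * s := by
  have h1 : -1 ≤ s / k := by rw [le_div_iff₀ hk]; linarith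
  have h2 := rpow_one_add_le_one_add_mul_self h1 ha0 ha1
  have h3 : k + s = k * (1 + s / k) := by field_simp
  rw [h3, Real.mul_rpow hk.le (by linarith), Real.rpow_sub_one hk.ne']
  calc k ^ a * (1 + s/k) ^ a ≤ k ^ a * (1 + a * (s / k)) := by gcongr
    _ = _ := by field_simp

section taub
variable (l : ℕ) (x K : ℝ) (h c : ℕ → ℝ)

lemma tn_tendsto (hl : 1 ≤ l) (b : ℝ) (hb : 0 < b) :
    Tendsto (fun n : ℕ => b * (n:ℝ) ^ (-(1/(l:ℝ)))) atTop (𝓝[>] 0) := by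
  refine tendsto_nhdsWithin_iff.2 ⟨?_, ?_⟩
  · have h1 : Tendsto (fun n : ℕ => (n:ℝ) ^ (-(1/(l:ℝ)))) atTop (𝓝 0) :=
      (tendsto_rpow_neg_atTop (by positivity)).comp tendsto_natCast_atTop_atTop
    simpa using h1.const_mul b
  · filter_upwards [eventually_gt_atTop 0] with n hn
    have : (0:ℝ) < n := by exact_mod_cast hn
    exact Set.mem_Ioi.2 (by positivity)

lemma S_limit (hl : 1 ≤ l) (S : ℝ → ℝ)
    (hS : Tendsto (fun t => t^l * S t) (𝓝[>] 0) (𝓝 K)) (b : ℝ) (hb : 0 < b) :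
    Tendsto (fun n : ℕ => S (b * (n:ℝ) ^ (-(1/(l:ℝ)))) / n) atTop (𝓝 (K / b^l)) := by
  have h1 := (hS.comp (tn_tendsto l hl b hb)).div_const (b^l)
  refine h1.congr' ?_
  filter_upwards [eventually_gt_atTop 0] with n hn
  have hn' : (0:ℝ) < n := by exact_mod_cast hn
  simp only [Function.comp]
  have h2 : ((n:ℝ) ^ (-(1/(l:ℝ))))^l = (n:ℝ)⁻¹ := by
    rw [← Real.rpow_natCast, ← Real.rpow_mul hn'.le]
    have : -(1/(l:ℝ)) * l = -1 := by
      have : (l:ℝ) ≠ 0 := by positivity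
      field_simp
    rw [this, Real.rpow_neg_one]
  rw [mul_pow, h2]
  field_simp

lemma taub_upper (hl : 2 ≤ l) (hx : 0 < x) (hc : ∀ m, 0 ≤ c m) (hh : ∀ n, 0 < h n)
    (hrec : ∀ n : ℕ, n * h n = x * ∑ m ∈ Finset.Icc 1 n, c m * h (n - m))
    (hsum : ∀ t : ℝ, 0 < t → Summable (fun m : ℕ => c m * Real.exp (-((m:ℝ) * t))))
    (hS : Tendsto (fun t => t^l * ∑' m : ℕ, c m * Real.exp (-((m:ℝ) * t))) (𝓝[>] 0) (𝓝 K))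
    (A a : ℝ) (hA : 0 < A) (ha : a = ((l:ℝ)-1)/l) (hAK : x * K < (A * a)^l) :
    ∃ C : ℝ, 0 < C ∧ ∀ n : ℕ, h n ≤ C * Real.exp (A * (n:ℝ) ^ a) := by
  have hl' : (2:ℝ) ≤ l := by exact_mod_cast hl
  have ha0 : 0 < a := by rw [ha]; apply div_pos <;> linarith
  have ha1 : a < 1 := by rw [ha, div_lt_one] <;> linarith
  have ha2 : a - 1 = -(1/(l:ℝ)) := by rw [ha]; field_simp; ring
  have hb : 0 < A * a := by positivity
  have hlim := (S_limit l K (by omega) _ hS (A*a) hb).const_mul x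
  have hlt : x * (K / (A*a)^l) < 1 := by
    rw [← mul_div_assoc, div_lt_one (by positivity)]; exact hAK
  have hev := hlim.eventually_lt_const hlt
  obtain ⟨N, hN⟩ := eventually_atTop.1 (hev.and (eventually_gt_atTop 0))
  refine ⟨1 + ∑ i ∈ Finset.range N, h i, ?_, ?_⟩
  · have : 0 ≤ ∑ i ∈ Finset.range N, h i := Finset.sum_nonneg fun i _ => (hh i).le
    linarith
  set C := 1 + ∑ i ∈ Finset.range N, h i with hC
  have hCpos : 0 < C := by
    have : 0 ≤ ∑ i ∈ Finset.range N, h i := Finset.sum_nonneg fun i _ => (hh i).le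
    linarith
  intro n
  induction n using Nat.strong_induction_on with
  | _ n ih =>
    rcases lt_or_ge n N with hn | hn
    · have h1 : h n ≤ ∑ i ∈ Finset.range N, h i :=
        Finset.single_le_sum (f := h) (fun i _ => (hh i).le) (Finset.mem_range.2 hn)
      have h2 : 1 ≤ Real.exp (A * (n:ℝ)^a) := Real.one_le_exp (by positivity)
      nlinarith
    · obtain ⟨h1, h2⟩ := hN n hn
      have hn' : (0:ℝ) < n := by exact_mod_cast h2
      set t := A * a * (n:ℝ) ^ (-(1/(l:ℝ))) with ht
      have htpos : 0 < t := by positivity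
      have h3 : n * h n ≤ n * (C * Real.exp (A * (n:ℝ) ^ a)) := by
        rw [hrec]
        calc x * ∑ m ∈ Finset.Icc 1 n, c m * h (n - m) 
            ≤ x * ∑ m ∈ Finset.Icc 1 n, (C * Real.exp (A * (n:ℝ) ^ a)) * (c m * Real.exp (-((m:ℝ) * t))) := by
              refine mul_le_mul_of_nonneg_left (Finset.sum_le_sum fun m hm => ?_) hx.le
              rw [Finset.mem_Icc] at hm
              have h4 := ih (n-m) (by omega)
              have h5 : ((n-m:ℕ):ℝ) = n + (-m) := by rw [Nat.cast_sub hm.2]; ring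
              have h6 := bern a n (-m) ha0.le ha1.le hn' (by 
                have : (m:ℝ) ≤ n := by exact_mod_cast hm.2
                linarith)
              rw [ha2] at h6
              have h7 : Real.exp (A * ((n-m:ℕ):ℝ)^a) ≤ Real.exp (A * (n:ℝ) ^ a) * Real.exp (-((m:ℝ) * t)) := by
                rw [← Real.exp_add, Real.exp_le_exp, h5, ht]
                have := mul_le_mul_of_nonneg_left h6 hA.le
                linarith
              calc c m * h (n-m) ≤ c m * (C * (Real.exp (A * (n:ℝ) ^ a) * Real.exp (-((m:ℝ) * t)))) := by
                    have := hc m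
                    gcongr
                    exact h4.trans (by gcongr)
                _ = _ := by ring
          _ = (C * Real.exp (A * (n:ℝ) ^ a)) * (x * ∑ m ∈ Finset.Icc 1 n, (c m * Real.exp (-((m:ℝ) * t)))) := by
              rw [← Finset.mul_sum]; ring
          _ ≤ (C * Real.exp (A * (n:ℝ) ^ a)) * (x * ∑' m : ℕ, (c m * Real.exp (-((m:ℝ) * t)))) := by
              gcongr
              exact (hsum t htpos).sum_le_tsum _ (fun m _ => mul_nonneg (hc m) (Real.exp_pos _).le)
          _ ≤ (C * Real.exp (A * (n:ℝ) ^ a)) * n := by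
              gcongr
              rw [← mul_div_assoc, div_lt_one hn'] at h1
              exact h1.le
          _ = _ := by ring
      exact le_of_mul_le_mul_left h3 hn'

lemma trunc (hc : ∀ m, 0 ≤ c m) (hc0 : c 0 = 0)
    (hsum : ∀ t : ℝ, 0 < t → Summable (fun m : ℕ => c m * Real.exp (-((m:ℝ) * t))))
    (n : ℕ) (y t : ℝ) (hy : y ≤ n) (ht : 0 < t) :
    ∑' m : ℕ, c m * Real.exp (-((m:ℝ) * t)) - 
      Real.exp (-(y * t / 2)) * ∑' m : ℕ, c m * Real.exp (-((m:ℝ) * (t/2))) ≤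
    ∑ m ∈ (Finset.Icc 1 n).filter (fun m : ℕ => (m:ℝ) ≤ y), c m * Real.exp (-((m:ℝ) * t)) := by
  set F := (Finset.Icc 1 n).filter (fun m : ℕ => (m:ℝ) ≤ y)
  have h2 := (hsum (t/2) (by positivity)).mul_left (Real.exp (-(y * t / 2)))
  have h1 := (hsum t ht)
  have hF : Summable (fun m : ℕ => if m ∈ F then c m * Real.exp (-((m:ℝ) * t)) else 0) :=
    summable_of_ne_finset_zero (s := F) (fun m hm => by simp [hm])
  have hFs : ∑' m : ℕ, (if m ∈ F then c m * Real.exp (-((m:ℝ) * t)) else 0) = 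
      ∑ m ∈ F, c m * Real.exp (-((m:ℝ) * t)) := by
    rw [tsum_eq_sum (s := F) (fun m hm => by simp [hm])]
    exact Finset.sum_congr rfl fun m hm => by simp [hm]
  have := h1.tsum_le_tsum (g := fun m : ℕ => (if m ∈ F then c m * Real.exp (-((m:ℝ) * t)) else 0) + 
    Real.exp (-(y * t / 2)) * (c m * Real.exp (-((m:ℝ) * (t/2))))) ?_ (hF.add h2)
  · rw [hF.tsum_add h2, hFs, tsum_mul_left] at this
    linarith
  · intro m
    by_cases hm : m ∈ F
    · simp only [hm, if_true]
      have := hc m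
      have : 0 ≤ Real.exp (-(y * t / 2)) * (c m * Real.exp (-((m:ℝ) * (t/2)))) := by positivity
      linarith
    · simp only [hm, if_false, zero_add]
      rcases Nat.eq_zero_or_pos m with h0 | h0
      · subst h0; simp [hc0]
      · have hmy : y ≤ m := by
          by_contra hlt
          push Not at hlt
          apply hm
          simp only [F, Finset.mem_filter, Finset.mem_Icc]
          refine ⟨⟨h0, ?_⟩, hlt.le⟩
          exact_mod_cast hlt.le.trans hy
        calc _ ≤ c m * (Real.exp (-(y * t / 2)) * Real.exp (-((m:ℝ) * (t/2)))) := by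
              have := hc m
              gcongr
              rw [← Real.exp_add, Real.exp_le_exp]
              nlinarith
          _ = _ := by ring

lemma taub_lower (hl : 2 ≤ l) (hx : 0 < x) (hK : 0 < K) (hc : ∀ m, 0 ≤ c m) (hc0 : c 0 = 0) (hh : ∀ n, 0 < h n)
    (hrec : ∀ n : ℕ, n * h n = x * ∑ m ∈ Finset.Icc 1 n, c m * h (n - m))
    (hsum : ∀ t : ℝ, 0 < t → Summable (fun m : ℕ => c m * Real.exp (-((m:ℝ) * t))))
    (hS : Tendsto (fun t => t^l * ∑' m : ℕ, c m * Real.exp (-((m:ℝ) * t))) (𝓝[>] 0) (𝓝 K))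
    (A a : ℝ) (hA : 0 < A) (ha : a = ((l:ℝ)-1)/l) (hAK : (A * a)^l < x * K) :
    ∃ C : ℝ, 0 < C ∧ ∀ n : ℕ, C * Real.exp (A * (n:ℝ) ^ a) ≤ h n := by
  have hl' : (2:ℝ) ≤ l := by exact_mod_cast hl
  have ha0 : 0 < a := by rw [ha]; apply div_pos <;> linarith
  have ha1 : a < 1 := by rw [ha, div_lt_one] <;> linarith
  have ha2 : a - 1 = -(1/(l:ℝ)) := by rw [ha]; field_simp; ring
  have hAa : 0 < A * a := by positivity
  obtain ⟨u, hu1, hu2⟩ : ∃ u : ℝ, (A*a)^l / (x*K) < u ∧ u < 1 :=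
    exists_between (by rw [div_lt_one (by positivity)]; exact hAK)
  have hu0 : 0 < u := lt_trans (by positivity) hu1
  set b := A * a * u ^ (-(1/(l:ℝ))) with hb_def
  have hb : 0 < b := by positivity
  have hbl : b ^ l = (A*a)^l / u := by
    have h2 : (u ^ (-(1/(l:ℝ))))^l = u⁻¹ := by
      rw [← Real.rpow_natCast, ← Real.rpow_mul hu0.le]
      have : -(1/(l:ℝ)) * l = -1 := by field_simp
      rw [this, Real.rpow_neg_one]
    rw [hb_def, mul_pow, h2]; rfl
  have hlim1 := (S_limit l K (by omega) _ hS b hb)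
  have hlim2 := (S_limit l K (by omega) _ hS (b/2) (by positivity))
  have hlim3 : Tendsto (fun n : ℕ => Real.exp (-((1-u)*b/2 * (n:ℝ)^a))) atTop (𝓝 0) := by
    refine Real.tendsto_exp_neg_atTop_nhds_zero.comp ?_
    refine Tendsto.const_mul_atTop (by have : 0 < 1 - u := by linarith
                                       positivity) ?_
    exact (tendsto_rpow_atTop ha0).comp tendsto_natCast_atTop_atTop
  have hlim := ((hlim1.sub (hlim3.mul hlim2)).const_mul x)
  rw [zero_mul, sub_zero] at hlim
  have hgt : 1 < x * (K / b^l) := by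
    rw [hbl, ← mul_div_assoc, lt_div_iff₀ (by positivity), one_mul]
    rw [div_lt_iff₀ (by positivity)] at hu1 ⊢
    linarith
  have hev := hlim.eventually_const_lt hgt
  obtain ⟨N, hN⟩ := eventually_atTop.1 (hev.and (eventually_gt_atTop 0))
  obtain ⟨C, hCpos, hC⟩ : ∃ C : ℝ, 0 < C ∧ ∀ n < N, C * Real.exp (A * (n:ℝ)^a) ≤ h n := by
    clear hN
    induction N with
    | zero => exact ⟨1, one_pos, fun n hn => by omega⟩
    | succ N ih =>
      obtain ⟨C, h1, h2⟩ := ih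
      refine ⟨min C (h N * Real.exp (-(A * (N:ℝ)^a))), lt_min h1 (mul_pos (hh N) (Real.exp_pos _)), ?_⟩
      intro n hn
      rcases Nat.lt_succ_iff_lt_or_eq.1 hn with hn | hn
      · exact le_trans (by gcongr; exact min_le_left _ _) (h2 n hn)
      · subst hn
        calc _ ≤ (h n * Real.exp (-(A * (n:ℝ)^a))) * Real.exp (A * (n:ℝ)^a) := by
              gcongr; exact min_le_right _ _
          _ = h n := by rw [mul_assoc, ← Real.exp_add]; simp
  refine ⟨C, hCpos, ?_⟩
  intro n
  induction n using Nat.strong_induction_on with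
  | _ n ih =>
    rcases lt_or_ge n N with hn | hn
    · exact hC n hn
    · obtain ⟨h1, h2⟩ := hN n hn
      have hn' : (0:ℝ) < n := by exact_mod_cast h2
      set t := b * (n:ℝ) ^ (-(1/(l:ℝ))) with ht
      have htpos : 0 < t := by positivity
      set y := (1-u) * n with hy
      have hyn : y ≤ n := by rw [hy]; nlinarith
      have htr := trunc c hc hc0 hsum n y t hyn htpos
      have e1 : b / 2 * (n:ℝ) ^ (-(1/(l:ℝ))) = t / 2 := by rw [ht]; ring
      have e2 : (1-u)*b/2 * (n:ℝ)^a = y * t / 2 := by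
        rw [ht, hy, ← ha2, Real.rpow_sub_one hn'.ne']; field_simp
      rw [e1, e2, ← mul_div_assoc, ← sub_div, ← mul_div_assoc, lt_div_iff₀ hn', one_mul] at h1
      have h3 : n * (C * Real.exp (A * (n:ℝ) ^ a)) ≤ n * h n := by
        rw [hrec]
        calc n * (C * Real.exp (A * (n:ℝ) ^ a)) 
            ≤ (x * ∑ m ∈ (Finset.Icc 1 n).filter (fun m : ℕ => (m:ℝ) ≤ y), c m * Real.exp (-((m:ℝ) * t)))
              * (C * Real.exp (A * (n:ℝ) ^ a)) := by
              gcongr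
              exact h1.le.trans (by gcongr)
          _ = x * ∑ m ∈ (Finset.Icc 1 n).filter (fun m : ℕ => (m:ℝ) ≤ y), 
              (C * Real.exp (A * (n:ℝ) ^ a)) * (c m * Real.exp (-((m:ℝ) * t))) := by
              rw [← Finset.mul_sum]; ring
          _ ≤ x * ∑ m ∈ (Finset.Icc 1 n).filter (fun m : ℕ => (m:ℝ) ≤ y), c m * h (n - m) := by
              refine mul_le_mul_of_nonneg_left (Finset.sum_le_sum fun m hm => ?_) hx.le
              simp only [Finset.mem_filter, Finset.mem_Icc] at hm
              obtain ⟨⟨hm1, hm2⟩, hm3⟩ := hm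
              have h4 := ih (n-m) (by omega)
              have h5 : ((n-m:ℕ):ℝ) = n - m := by rw [Nat.cast_sub hm2]
              have hk : u * n ≤ (n:ℝ) - m := by rw [hy] at hm3; linarith
              have hk0 : (0:ℝ) < n - m := lt_of_lt_of_le (by positivity) hk
              have h6 := bern a (n-m) m ha0.le ha1.le hk0 (by simp)
              rw [sub_add_cancel] at h6
              have h8 : ((n:ℝ) - m)^(a-1) ≤ u ^ (-(1/(l:ℝ))) * (n:ℝ) ^ (-(1/(l:ℝ))) := by
                rw [← Real.mul_rpow hu0.le hn'.le, ha2]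
                exact Real.rpow_le_rpow_of_nonpos (by positivity) hk (by rw [← ha2]; linarith)
              have h7 : Real.exp (A * (n:ℝ) ^ a) * Real.exp (-((m:ℝ) * t)) ≤ Real.exp (A * ((n-m:ℕ):ℝ)^a) := by
                rw [← Real.exp_add, Real.exp_le_exp, h5, ht, hb_def]
                have h9 : A * (n:ℝ)^a ≤ A * (((n:ℝ) - m)^a + a * (u ^ (-(1/(l:ℝ))) * (n:ℝ) ^ (-(1/(l:ℝ)))) * m) := by
                  gcongr
                  refine h6.trans ?_
                  gcongr
                nlinarith
              calc _ = c m * (C * (Real.exp (A * (n:ℝ) ^ a) * Real.exp (-((m:ℝ) * t)))) := by ring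
                _ ≤ c m * h (n-m) := by
                    have := hc m
                    gcongr
                    exact le_trans (by gcongr) h4
          _ ≤ _ := by
              refine mul_le_mul_of_nonneg_left ?_ hx.le
              refine Finset.sum_le_sum_of_subset_of_nonneg (Finset.filter_subset _ _) ?_
              intro m _ _
              exact mul_nonneg (hc m) (hh _).le
      exact le_of_mul_le_mul_left h3 hn'

lemma taub (hl : 2 ≤ l) (hx : 0 < x) (hK : 0 < K) (hc : ∀ m, 0 ≤ c m) (hc0 : c 0 = 0) (hh : ∀ n, 0 < h n)
    (hrec : ∀ n : ℕ, n * h n = x * ∑ m ∈ Finset.Icc 1 n, c m * h (n - m))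
    (hsum : ∀ t : ℝ, 0 < t → Summable (fun m : ℕ => c m * Real.exp (-((m:ℝ) * t))))
    (hS : Tendsto (fun t => t^l * ∑' m : ℕ, c m * Real.exp (-((m:ℝ) * t))) (𝓝[>] 0) (𝓝 K)) :
    Tendsto (fun n : ℕ => Real.log (h n) /
          ((l : ℝ) / ((l : ℝ) - 1) * (x * K) ^ ((1 : ℝ) / (l : ℝ)) *
            (n : ℝ) ^ (((l : ℝ) - 1) / (l : ℝ)))) atTop (𝓝 1) := by
  have hl' : (2:ℝ) ≤ l := by exact_mod_cast hl
  have hl1 : (0:ℝ) < l - 1 := by linarith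
  set a := ((l:ℝ)-1)/l with ha
  set A0 := (l : ℝ) / ((l : ℝ) - 1) * (x * K) ^ ((1 : ℝ) / (l : ℝ)) with hA0
  have hA0pos : 0 < A0 := by positivity
  have ha0 : 0 < a := by positivity
  have hA0l : (A0 * a)^l = x * K := by
    have : A0 * a = (x*K)^((1:ℝ)/l) := by rw [hA0, ha]; field_simp
    rw [this, ← Real.rpow_natCast, ← Real.rpow_mul (by positivity)]
    rw [one_div_mul_cancel (by positivity), Real.rpow_one]
  have hna : Tendsto (fun n : ℕ => (n:ℝ)^a) atTop atTop :=
    (tendsto_rpow_atTop ha0).comp tendsto_natCast_atTop_atTop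
  rw [tendsto_order]
  constructor
  · intro v hv
    obtain ⟨w, hw1, hw2⟩ : ∃ w, max v 0 < w ∧ w < 1 := exists_between (max_lt hv one_pos)
    have hw0 : 0 < w := lt_of_le_of_lt (le_max_right _ _) hw1
    have hvw : v < w := lt_of_le_of_lt (le_max_left _ _) hw1
    obtain ⟨C, hC, hC2⟩ := taub_lower l x K h c hl hx hK hc hc0 hh hrec hsum hS (w * A0) a (by positivity) ha (by
      rw [← hA0l]
      have : w * A0 * a < A0 * a := by
        have : 0 < A0 * a := by positivity
        nlinarith
      gcongr)
    have hlim : Tendsto (fun n : ℕ => (Real.log C + w * A0 * (n:ℝ)^a) / (A0 * (n:ℝ)^a)) atTop (𝓝 w) := by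
      have h1 : Tendsto (fun n : ℕ => Real.log C / (A0 * (n:ℝ)^a) + w) atTop (𝓝 (0 + w)) :=
        (tendsto_const_nhds.div_atTop (hna.const_mul_atTop hA0pos)).add_const w
      rw [zero_add] at h1
      refine h1.congr' ?_
      filter_upwards [eventually_gt_atTop 0] with n hn
      have hn' : (0:ℝ) < n := by exact_mod_cast hn
      have : 0 < (n:ℝ)^a := by positivity
      field_simp
    filter_upwards [hlim.eventually_const_lt hvw, eventually_gt_atTop 0] with n h1 hn
    have hn' : (0:ℝ) < n := by exact_mod_cast hn
    refine lt_of_lt_of_le h1 ?_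
    gcongr
    have := Real.log_le_log (by positivity) (hC2 n)
    rwa [Real.log_mul hC.ne' (Real.exp_pos _).ne', Real.log_exp] at this
  · intro v hv
    obtain ⟨w, hw1, hw2⟩ : ∃ w, 1 < w ∧ w < v := exists_between hv
    have hw0 : 0 < w := by linarith
    obtain ⟨C, hC, hC2⟩ := taub_upper l x K h c hl hx hc hh hrec hsum hS (w * A0) a (by positivity) ha (by
      rw [← hA0l]
      have : A0 * a < w * A0 * a := by
        have : 0 < A0 * a := by positivity
        nlinarith
      gcongr)
    have hlim : Tendsto (fun n : ℕ => (Real.log C + w * A0 * (n:ℝ)^a) / (A0 * (n:ℝ)^a)) atTop (𝓝 w) := by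
      have h1 : Tendsto (fun n : ℕ => Real.log C / (A0 * (n:ℝ)^a) + w) atTop (𝓝 (0 + w)) :=
        (tendsto_const_nhds.div_atTop (hna.const_mul_atTop hA0pos)).add_const w
      rw [zero_add] at h1
      refine h1.congr' ?_
      filter_upwards [eventually_gt_atTop 0] with n hn
      have hn' : (0:ℝ) < n := by exact_mod_cast hn
      have : 0 < (n:ℝ)^a := by positivity
      field_simp
    filter_upwards [hlim.eventually_lt_const hw2, eventually_gt_atTop 0] with n h1 hn
    have hn' : (0:ℝ) < n := by exact_mod_cast hn
    refine lt_of_le_of_lt ?_ h1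
    gcongr
    have := Real.log_le_log (hh n) (hC2 n)
    rwa [Real.log_mul hC.ne' (Real.exp_pos _).ne', Real.log_exp] at this

end taub

section recur
open Equiv
variable {G : Type*} [Group G]

def orbS {α : Type*} (φ : G →* Perm α) : Setoid α where
  r a b := ∃ g, φ g a = b
  iseqv := ⟨fun a => ⟨1, by simp⟩, fun {a b} ⟨g, h⟩ => ⟨g⁻¹, by rw [← h]; simp⟩,
    fun {a b c} ⟨g, h⟩ ⟨g', h'⟩ => ⟨g' * g, by rw [map_mul, Perm.mul_apply, h, h']⟩⟩

noncomputable def kap {α : Type*} (φ : G →* Perm α) : ℕ := Nat.card (Quotient (orbS φ))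

def Psi {H : Subgroup G} {α β : Type*} (f : (G ⧸ H) ⊕ β ≃ α) (ψ : G →* Perm β) : G →* Perm α :=
  (f.permCongrHom.toMonoidHom).comp
    ((Perm.sumCongrHom (G ⧸ H) β).comp ((MulAction.toPermHom G (G ⧸ H)).prod ψ))

lemma Psi_inl {H : Subgroup G} {α β : Type*} (f : (G ⧸ H) ⊕ β ≃ α) (ψ : G →* Perm β) (g : G) (q : G ⧸ H) :
    Psi f ψ g (f (Sum.inl q)) = f (Sum.inl (g • q)) := by
  simp [Psi, Equiv.permCongrHom]

lemma Psi_inr {H : Subgroup G} {α β : Type*} (f : (G ⧸ H) ⊕ β ≃ α) (ψ : G →* Perm β) (g : G) (y : β) :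
    Psi f ψ g (f (Sum.inr y)) = f (Sum.inr (ψ g y)) := by
  simp [Psi, Equiv.permCongrHom]

lemma kap_Psi {H : Subgroup G} {α β : Type*} [Finite β] (f : (G ⧸ H) ⊕ β ≃ α) (ψ : G →* Perm β) :
    kap (Psi f ψ) = kap ψ + 1 := by
  unfold kap
  rw [← Finite.card_option]
  symm
  let T : Option (Quotient (orbS ψ)) → Quotient (orbS (Psi f ψ)) := fun o => 
    o.elim (Quotient.mk _ (f (Sum.inl (QuotientGroup.mk 1))))
      (Quotient.lift (fun y => Quotient.mk _ (f (Sum.inr y))) (by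
        rintro y y' ⟨g, hg⟩
        exact Quotient.sound ⟨g, by rw [Psi_inr, hg]⟩))
  refine Nat.card_congr (Equiv.ofBijective T ⟨?_, ?_⟩)
  · rintro (_ | y) (_ | y') h
    · rfl
    · exfalso
      induction y' using Quotient.inductionOn with
      | _ y' =>
      obtain ⟨g, hg⟩ := Quotient.exact h
      rw [Psi_inl] at hg
      simpa using hg
    · exfalso
      induction y using Quotient.inductionOn with
      | _ y =>
      obtain ⟨g, hg⟩ := Quotient.exact h
      rw [Psi_inr] at hg
      simpa using hg
    · induction y using Quotient.inductionOn with
      | _ y =>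
      induction y' using Quotient.inductionOn with
      | _ y' =>
      obtain ⟨g, hg⟩ := Quotient.exact h
      rw [Psi_inr] at hg
      have : ψ g y = y' := by simpa using hg
      congr 1
      exact Quotient.sound ⟨g, this⟩
  · intro z
    induction z using Quotient.inductionOn with
    | _ z =>
    obtain ⟨s, rfl⟩ := f.surjective z
    rcases s with q | y
    · obtain ⟨g, rfl⟩ := QuotientGroup.mk_surjective q
      refine ⟨none, Quotient.sound ⟨g, ?_⟩⟩
      rw [Psi_inl]; simp
    · exact ⟨some (Quotient.mk _ y), rfl⟩

lemma exists_ext {γ : Type*} (n m : ℕ) (hm : Nat.card γ = m) (hm0 : m ≠ 0) (e : γ ↪ Fin n) :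
    ∃ f : γ ⊕ Fin (n - m) ≃ Fin n, ∀ q, f (Sum.inl q) = e q := by
  classical
  have hfin : Finite γ := Nat.finite_of_card_ne_zero (by rw [hm]; exact hm0)
  have := Fintype.ofFinite γ
  have hc : Fintype.card ((Set.range e)ᶜ : Set (Fin n)) = n - m := by
    rw [Fintype.card_compl_set, Fintype.card_fin, Set.card_range_of_injective e.injective, ← hm, Nat.card_eq_fintype_card]
  let u : Fin (n-m) ≃ ((Set.range e)ᶜ : Set (Fin n)) := (Fintype.equivFinOfCardEq hc).symm
  refine ⟨(Equiv.sumCongr (Equiv.ofInjective e e.injective) u).trans (Equiv.Set.sumCompl (Set.range e)), ?_⟩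
  intro q
  simp

lemma Psi_surj {H : Subgroup G} {α β : Type*} [Finite (G ⧸ H)] [Finite β] (f : (G ⧸ H) ⊕ β ≃ α)
    (φ : G →* Perm α) (hφ : ∀ g q, φ g (f (Sum.inl q)) = f (Sum.inl (g • q))) :
    ∃ ψ : G →* Perm β, Psi f ψ = φ := by
  let φ' : G →* Perm ((G ⧸ H) ⊕ β) := (f.symm.permCongrHom.toMonoidHom).comp φ
  have hφ' : ∀ g s, φ' g s = f.symm (φ g (f s)) := fun g s => by simp [φ', Equiv.permCongrHom]
  have hr : ∀ g, φ' g ∈ (Perm.sumCongrHom (G ⧸ H) β).range := by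
    intro g
    apply Perm.mem_sumCongrHom_range_of_perm_mapsTo_inl
    rintro _ ⟨q, rfl⟩
    rw [hφ', hφ]; simp
  let w := (MonoidHom.ofInjective (Perm.sumCongrHom_injective (α := G ⧸ H) (β := β))).symm.toMonoidHom.comp
    (φ'.codRestrict _ hr)
  have hw : ∀ g, Perm.sumCongrHom (G ⧸ H) β (w g) = φ' g := by
    intro g
    have := MonoidHom.apply_ofInjective_symm (Perm.sumCongrHom_injective (α := G ⧸ H) (β := β)) ((φ'.codRestrict _ hr) g)
    exact this
  refine ⟨(MonoidHom.snd _ _).comp w, ?_⟩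
  ext g z
  obtain ⟨s, rfl⟩ := f.surjective z
  rcases s with q | y
  · rw [Psi_inl, hφ]
  · rw [Psi_inr]
    have h1 := congrArg (fun p => p (Sum.inr y)) (hw g)
    simp only [hφ'] at h1
    rw [← f.apply_symm_apply (φ g (f (Sum.inr y))), ← h1]
    rfl

def stab {α : Type*} (φ : G →* Perm α) (a : α) : Subgroup G where
  carrier := {g | φ g a = a}
  one_mem' := by simp
  mul_mem' := by
    intro g g' h h'
    simp only [Set.mem_ofPred_eq] at *
    rw [map_mul, Perm.mul_apply, h', h]
  inv_mem' := by
    intro g h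
    simp only [Set.mem_ofPred_eq] at *
    rw [map_inv, Perm.inv_eq_iff_eq, h]

lemma exists_emb {α : Type*} (φ : G →* Perm α) (a : α) :
    ∃ e : G ⧸ (stab φ a) ↪ α, ∀ g : G, e (QuotientGroup.mk g) = φ g a := by
  have key : ∀ g g' : G, (QuotientGroup.mk g : G ⧸ stab φ a) = QuotientGroup.mk g' ↔ φ g a = φ g' a := by
    intro g g'
    rw [QuotientGroup.eq]
    change φ (g⁻¹ * g') a = a ↔ _
    rw [map_mul, Perm.mul_apply, map_inv, Perm.inv_eq_iff_eq, eq_comm]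
  refine ⟨⟨Quotient.lift (fun g => φ g a) (fun g g' h => (key g g').1 (Quotient.sound h)), ?_⟩, fun g => rfl⟩
  intro p p' h
  obtain ⟨g, rfl⟩ := QuotientGroup.mk_surjective p
  obtain ⟨g', rfl⟩ := QuotientGroup.mk_surjective p'
  exact (key g g').2 h

variable [∀ n : ℕ, Fintype (G →* Perm (Fin n))]

variable (G) in
noncomputable def Wsum (x : ℝ) (n : ℕ) : ℝ := ∑ φ : G →* Perm (Fin n), x ^ kap φ

lemma Wsum_rec (x : ℝ) (n : ℕ)
    (hf : ∀ m : ℕ, m ≠ 0 → Finite {H : Subgroup G // H.index = m}) :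
    (n:ℝ) * Wsum G x n = ∑ m ∈ Finset.Icc 1 n,
      (Nat.card {H : Subgroup G // H.index = m} : ℝ) * (n.descFactorial m) * (x * Wsum G x (n - m)) := by
  classical
  have hm0 : ∀ m : Finset.Icc 1 n, (m:ℕ) ≠ 0 := fun m => by
    have := (Finset.mem_Icc.1 m.2).1; omega
  have i1 : ∀ m : Finset.Icc 1 n, Finite {H : Subgroup G // H.index = (m:ℕ)} := fun m => hf m (hm0 m)
  letI i1' : ∀ m : Finset.Icc 1 n, Fintype {H : Subgroup G // H.index = (m:ℕ)} := fun m => Fintype.ofFinite _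
  have i2 : ∀ (m : Finset.Icc 1 n) (H : {H : Subgroup G // H.index = (m:ℕ)}), Finite (G ⧸ H.1) := by
    intro m H
    have : H.1.FiniteIndex := ⟨by rw [H.2]; exact hm0 m⟩
    exact Subgroup.finite_quotient_of_finiteIndex
  letI i2' : ∀ (m : Finset.Icc 1 n) (H : {H : Subgroup G // H.index = (m:ℕ)}), Fintype (G ⧸ H.1) := 
    fun m H => Fintype.ofFinite _
  let Q := Σ m : Finset.Icc 1 n, Σ H : {H : Subgroup G // H.index = (m:ℕ)}, 
    ((G ⧸ H.1) ↪ Fin n) × (G →* Perm (Fin (n - m)))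
  choose f hfe using fun (m : Finset.Icc 1 n) (H : {H : Subgroup G // H.index = (m:ℕ)}) (e : (G ⧸ H.1) ↪ Fin n) =>
    exists_ext n (m:ℕ) H.2 (hm0 m) e
  let T : Q → Fin n × (G →* Perm (Fin n)) := fun p => 
    (p.2.2.1 (QuotientGroup.mk 1), Psi (f p.1 p.2.1 p.2.2.1) p.2.2.2)
  have hTe : ∀ (m : Finset.Icc 1 n) (H : {H : Subgroup G // H.index = (m:ℕ)}) (e : (G ⧸ H.1) ↪ Fin n)
      (ψ : G →* Perm (Fin (n - m))) (g : G) (q : G ⧸ H.1), Psi (f m H e) ψ g (e q) = e (g • q) := by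
    intro m H e ψ g q
    rw [← hfe, ← hfe, Psi_inl]
  have hTs : ∀ (m : Finset.Icc 1 n) (H : {H : Subgroup G // H.index = (m:ℕ)}) (e : (G ⧸ H.1) ↪ Fin n)
      (ψ : G →* Perm (Fin (n - m))), stab (Psi (f m H e) ψ) (e (QuotientGroup.mk 1)) = H.1 := by
    intro m H e ψ
    ext g
    change Psi (f m H e) ψ g (e (QuotientGroup.mk 1)) = e (QuotientGroup.mk 1) ↔ _
    rw [hTe, e.injective.eq_iff]
    change (QuotientGroup.mk (g * 1) : G ⧸ H.1) = _ ↔ _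
    rw [mul_one, eq_comm, QuotientGroup.eq]
    simp
  have hT : Function.Bijective T := by
    constructor
    · rintro ⟨m, H, e, ψ⟩ ⟨m', H', e', ψ'⟩ h
      have ha : e (QuotientGroup.mk 1) = e' (QuotientGroup.mk 1) := congrArg Prod.fst h
      have hp : Psi (f m H e) ψ = Psi (f m' H' e') ψ' := congrArg Prod.snd h
      have hH : H.1 = H'.1 := by rw [← hTs m H e ψ, ← hTs m' H' e' ψ', ha, hp]
      have hmm : m = m' := Subtype.ext (by rw [← H.2, ← H'.2, hH])
      subst hmm
      have hHH : H = H' := Subtype.ext hH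
      subst hHH
      have hee : e = e' := by
        ext q
        obtain ⟨g, rfl⟩ := QuotientGroup.mk_surjective q
        have h1 := hTe m H e ψ g (QuotientGroup.mk 1)
        have h2 := hTe m H e' ψ' g (QuotientGroup.mk 1)
        rw [hp, ha, h2] at h1
        have h3 : g • (QuotientGroup.mk 1 : G ⧸ H.1) = QuotientGroup.mk g := by
          change (QuotientGroup.mk (g * 1) : G ⧸ H.1) = _
          rw [mul_one]
        rw [h3] at h1
        rw [h1]
      subst hee
      have hψ : ψ = ψ' := by
        ext g y
        have h1 := Psi_inr (f m H e) ψ g y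
        rw [hp, Psi_inr] at h1
        have := (f m H e).injective h1
        have h4 : ψ' g y = ψ g y := Sum.inr_injective this
        rw [h4]
      subst hψ
      rfl
    · rintro ⟨a, φ⟩
      obtain ⟨e, he⟩ := exists_emb φ a
      have hfin : Finite (G ⧸ stab φ a) := Finite.of_injective e e.injective
      have hidx : (stab φ a).index ∈ Finset.Icc 1 n := by
        rw [Finset.mem_Icc]
        constructor
        · exact Nat.card_pos
        · have := Nat.card_le_card_of_injective e e.injective
          rwa [Nat.card_fin] at this
      have hequiv : ∀ g q, φ g (f ⟨_, hidx⟩ ⟨stab φ a, rfl⟩ e (Sum.inl q)) = 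
          f ⟨_, hidx⟩ ⟨stab φ a, rfl⟩ e (Sum.inl (g • q)) := by
        intro g q
        rw [hfe, hfe]
        obtain ⟨g', rfl⟩ := QuotientGroup.mk_surjective q
        change _ = e (QuotientGroup.mk (g * g'))
        rw [he, he, map_mul, Perm.mul_apply]
      obtain ⟨ψ, hψ⟩ := Psi_surj _ φ hequiv
      refine ⟨⟨⟨_, hidx⟩, ⟨stab φ a, rfl⟩, e, ψ⟩, ?_⟩
      refine Prod.ext ?_ hψ
      change e (QuotientGroup.mk 1) = a
      rw [he]; simp
  have hsum := hT.sum_comp (fun p : Fin n × (G →* Perm (Fin n)) => x ^ kap p.2)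
  have hL : ∑ p : Fin n × (G →* Perm (Fin n)), x ^ kap p.2 = (n:ℝ) * Wsum G x n := by
    rw [Fintype.sum_prod_type]; simp [Wsum]
  rw [← hL, ← hsum, Fintype.sum_sigma]
  rw [← Finset.sum_coe_sort (Finset.Icc 1 n) (fun m => (Nat.card {H : Subgroup G // H.index = m} : ℝ) * (n.descFactorial m) * (x * Wsum G x (n - m)))]
  refine Finset.sum_congr rfl fun m _ => ?_
  rw [Fintype.sum_sigma]
  have : ∀ H : {H : Subgroup G // H.index = (m:ℕ)}, 
    ∑ y : ((G ⧸ H.1) ↪ Fin n) × (G →* Perm (Fin (n - m))), x ^ kap (T ⟨m, H, y⟩).2 =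
      (n.descFactorial m) * (x * Wsum G x (n - m)) := by
    intro H
    have hk : ∀ y : ((G ⧸ H.1) ↪ Fin n) × (G →* Perm (Fin (n - m))), kap (T ⟨m, H, y⟩).2 = kap y.2 + 1 :=
      fun y => kap_Psi _ _
    simp only [hk]
    rw [Fintype.sum_prod_type]
    simp only [Finset.sum_const, Finset.card_univ, Fintype.card_embedding_eq, Fintype.card_fin]
    have hc : Fintype.card (G ⧸ H.1) = m := by rw [← Nat.card_eq_fintype_card]; exact H.2
    rw [hc, nsmul_eq_mul, Wsum]
    congr 1
    rw [Finset.mul_sum]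
    exact Finset.sum_congr rfl fun φ _ => by rw [pow_succ]; ring
  simp only [this]
  simp [mul_assoc]

end recur

section fin5
open Equiv

def eG {l : ℕ} (i : Fin l) : Multiplicative (Fin l → ℤ) := Multiplicative.ofAdd (Pi.single i 1)

lemma eG_closure (l : ℕ) : Subgroup.closure (Set.range (eG (l := l))) = ⊤ := by
  rw [eq_top_iff]
  intro g _
  have : g = ∏ i, eG i ^ (Multiplicative.toAdd g i) := by
    apply Multiplicative.toAdd.injective
    rw [toAdd_prod]
    funext j
    simp only [toAdd_zpow, eG, toAdd_ofAdd, Finset.sum_apply, Pi.smul_apply, Pi.single_apply]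
    simp
  rw [this]
  exact Subgroup.prod_mem _ fun i _ => Subgroup.zpow_mem _ (Subgroup.subset_closure (Set.mem_range_self i)) _

def toTup {l n : ℕ} (φ : Multiplicative (Fin l → ℤ) →* Perm (Fin n)) :
    {σ : Fin l → Perm (Fin n) // ∀ i j, σ i * σ j = σ j * σ i} :=
  ⟨fun i => φ (eG i), fun i j => by rw [← map_mul, ← map_mul, mul_comm]⟩

lemma toTup_bij (l n : ℕ) : Function.Bijective (toTup (l := l) (n := n)) := by
  constructor
  · intro φ ψ h
    apply MonoidHom.eq_of_eqOn_dense (eG_closure l)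
    rintro _ ⟨i, rfl⟩
    exact congrFun (congrArg Subtype.val h) i
  · rintro ⟨σ, hσ⟩
    let S : Multiplicative (Fin l → ℤ) →* (Fin l → Multiplicative ℤ) :=
      { toFun := fun g i => Multiplicative.ofAdd (Multiplicative.toAdd g i)
        map_one' := rfl
        map_mul' := fun _ _ => rfl }
    have hS : ∀ i, S (eG i) = Pi.mulSingle i (Multiplicative.ofAdd 1) := by
      intro i
      funext j
      by_cases h : j = i
      · subst h; simp [S, eG]
      · simp [S, eG, h]
    have hcm : Pairwise fun i j => ∀ a b, Commute ((fun i => zpowersHom (Perm (Fin n)) (σ i)) i a)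
        ((fun i => zpowersHom (Perm (Fin n)) (σ i)) j b) := by
      intro i j _ a b
      have h0 : Commute (σ i) (σ j) := hσ i j
      simp only [zpowersHom_apply]
      exact Commute.zpow_zpow h0 _ _
    refine ⟨(MonoidHom.noncommPiCoprod (fun i => zpowersHom (Perm (Fin n)) (σ i)) hcm).comp S,
      Subtype.ext (funext fun i => ?_)⟩
    change (MonoidHom.noncommPiCoprod (fun i => zpowersHom (Perm (Fin n)) (σ i)) hcm) (S (eG i)) = σ i
    rw [hS]
    refine (MonoidHom.noncommPiCoprod_mulSingle (fun i => zpowersHom (Perm (Fin n)) (σ i)) (hcomm := hcm) i _).trans ?_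
    simp

lemma kappa_toTup {l n : ℕ} (φ : Multiplicative (Fin l → ℤ) →* Perm (Fin n)) :
    kappa (toTup φ).1 = kap φ := by
  have hcl : Subgroup.closure (Set.range (toTup φ).1) = φ.range := by
    rw [MonoidHom.range_eq_map, ← eG_closure, MonoidHom.map_closure]
    congr 1
    rw [← Set.range_comp]; rfl
  unfold kappa kap
  rw [hcl]
  refine Nat.card_congr (Quotient.congr (Equiv.refl _) ?_)
  intro a b
  constructor
  · rintro ⟨⟨_, g, rfl⟩, h⟩
    refine (orbS φ).symm ?_
    exact ⟨g, h⟩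
  · intro h
    obtain ⟨g, hg⟩ := (orbS φ).symm h
    exact ⟨⟨_, g, rfl⟩, hg⟩

instance homFinite (l n : ℕ) : Finite (Multiplicative (Fin l → ℤ) →* Perm (Fin n)) :=
  Finite.of_injective _ (toTup_bij l n).1

noncomputable instance homFintype (l : ℕ) : ∀ n : ℕ, Fintype (Multiplicative (Fin l → ℤ) →* Perm (Fin n)) :=
  fun _ => Fintype.ofFinite _

lemma kap_le {G : Type*} [Group G] {n : ℕ} (φ : G →* Perm (Fin n)) : kap φ ≤ n := by
  have := Nat.card_le_card_of_surjective (Quotient.mk (orbS φ)) Quotient.mk_surjective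
  rwa [Nat.card_fin] at this

lemma Acount_eq (l n k : ℕ) : Acount l n k =
    (Finset.univ.filter fun φ : Multiplicative (Fin l → ℤ) →* Perm (Fin n) => kap φ = k).card := by
  rw [← Fintype.card_subtype, ← Nat.card_eq_fintype_card, Acount]
  symm
  let T : {φ : Multiplicative (Fin l → ℤ) →* Perm (Fin n) // kap φ = k} →
      {σ : Fin l → Perm (Fin n) // (∀ i j, σ i * σ j = σ j * σ i) ∧ kappa σ = k} :=
    fun φ => ⟨(toTup φ.1).1, (toTup φ.1).2, (kappa_toTup φ.1).trans φ.2⟩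
  refine Nat.card_congr (Equiv.ofBijective T ⟨?_, ?_⟩)
  · intro φ ψ h
    have h1 : (toTup φ.1).1 = (toTup ψ.1).1 := by
      have h0 : (T φ).1 = (T ψ).1 := by rw [h]
      exact h0
    exact Subtype.ext ((toTup_bij l n).1 (Subtype.ext h1))
  · rintro ⟨σ, h1, h2⟩
    obtain ⟨φ, hφ⟩ := (toTup_bij l n).2 ⟨σ, h1⟩
    have h3 : (toTup φ).1 = σ := congrArg Subtype.val hφ
    exact ⟨⟨φ, by rw [← kappa_toTup, h3, h2]⟩, Subtype.ext h3⟩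

lemma Hpoly_eq (l n : ℕ) (x : ℝ) : Hpoly l n x = 1 / (n.factorial : ℝ) * Wsum (Multiplicative (Fin l → ℤ)) x n := by
  rw [Hpoly, Wsum]
  congr 1
  rw [← Finset.sum_fiberwise_of_maps_to (s := Finset.univ) (t := Finset.range (n+1)) (g := fun φ => kap φ)
    (fun φ _ => Finset.mem_range.2 (Nat.lt_succ_of_le (kap_le φ)))]
  refine Finset.sum_congr rfl fun k _ => ?_
  rw [Acount_eq, Finset.sum_congr rfl (g := fun _ => x ^ k) (fun φ hφ => by rw [(Finset.mem_filter.1 hφ).2])]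
  simp

lemma Hpoly_pos (l n : ℕ) (x : ℝ) (hx : 0 < x) : 0 < Hpoly l n x := by
  rw [Hpoly_eq, Wsum]
  have : 0 < ∑ φ : Multiplicative (Fin l → ℤ) →* Perm (Fin n), x ^ kap φ :=
    Finset.sum_pos (fun φ _ => by positivity) ⟨1, Finset.mem_univ _⟩
  positivity

lemma Hpoly_rec (l n : ℕ) (x : ℝ) : (n:ℝ) * Hpoly l n x =
    x * ∑ m ∈ Finset.Icc 1 n, (cc l m : ℝ) * Hpoly l (n - m) x := by
  have h := Wsum_rec (G := Multiplicative (Fin l → ℤ)) x n (fun m hm => (sub_count_mul l m hm).1)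
  rw [Hpoly_eq, mul_left_comm, h, Finset.mul_sum, Finset.mul_sum]
  refine Finset.sum_congr rfl fun m hm => ?_
  rw [Finset.mem_Icc] at hm
  rw [(sub_count_mul l m (by omega)).2, Hpoly_eq]
  have h1 : (((n-m).factorial : ℕ) : ℝ) * (n.descFactorial m : ℝ) = n.factorial := by
    exact_mod_cast Nat.factorial_mul_descFactorial hm.2
  have h2 : (n.factorial : ℝ) ≠ 0 := by positivity
  have h3 : ((n-m).factorial : ℝ) ≠ 0 := by positivity
  rw [← h1]
  rw [← h1] at h2
  have h4 : (n.descFactorial m : ℝ) ≠ 0 := right_ne_zero_of_mul h2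
  field_simp

lemma zetaR_pos (j : ℕ) (hj : 2 ≤ j) : 0 < zetaR (j:ℝ) := by
  rw [zetaR_pnat]
  have hs : Summable (fun m : ℕ+ => 1/(m:ℝ)^j) := by
    have := (Real.summable_one_div_nat_pow (p := j)).2 (by omega)
    exact this.comp_injective PNat.coe_injective
  exact hs.tsum_pos (fun m => by positivity) 1 (by simp)

lemma Kconst_pos (l : ℕ) : 0 < Kconst l := by
  have : 0 < ∏ j ∈ Finset.Icc 2 l, zetaR (j:ℝ) :=
    Finset.prod_pos fun j hj => zetaR_pos j (Finset.mem_Icc.1 hj).1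
  unfold Kconst
  positivity

lemma cc_zero (l : ℕ) : cc l 0 = 0 := by
  cases l <;> simp [cc]

end fin5

/-- `ln H_{ℓ,n}(x) ~ (ℓ/(ℓ-1)) (x K_ℓ)^{1/ℓ} n^{(ℓ-1)/ℓ}` as `n → ∞`. -/
theorem logH_asymptotic (ℓ : ℕ) (hℓ : 2 ≤ ℓ) (x : ℝ) (hx : 0 < x) :
    Tendsto (fun n : ℕ =>
        Real.log (Hpoly ℓ n x) /
          ((ℓ : ℝ) / ((ℓ : ℝ) - 1) * (x * Kconst ℓ) ^ ((1 : ℝ) / (ℓ : ℝ)) *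
            (n : ℝ) ^ (((ℓ : ℝ) - 1) / (ℓ : ℝ))))
      atTop (nhds 1) := by
  obtain ⟨h1, -, h3⟩ := Sgood_all ℓ (by omega) 0
  have hsum : ∀ t : ℝ, 0 < t → Summable (fun m : ℕ => (cc ℓ m : ℝ) * Real.exp (-((m:ℝ)*t))) := by
    intro t ht
    rw [← summable_nat_add_iff 1,
      ← summable_pnat_iff_summable_succ (f := fun m : ℕ => (cc ℓ m : ℝ) * Real.exp (-((m:ℝ)*t)))]
    simpa using h1 t ht
  refine taub ℓ x (Kconst ℓ) (fun n => Hpoly ℓ n x) (fun m => (cc ℓ m : ℝ)) hℓ hx (Kconst_pos ℓ)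
    (fun m => Nat.cast_nonneg _) (by simp [cc_zero]) (fun n => Hpoly_pos ℓ n x hx)
    (fun n => Hpoly_rec ℓ n x) hsum ?_
  have hK : Kconst ℓ = ((ℓ - 1 + 0).factorial : ℝ) * ∏ j ∈ Finset.Icc 2 ℓ, zetaR (j:ℝ) := rfl
  rw [hK]
  refine h3.congr' ?_
  filter_upwards [self_mem_nhdsWithin] with t ht
  rw [add_zero, Sg, (hsum t ht).tsum_eq_zero_add,
    ← tsum_pnat_eq_tsum_succ (f := fun m : ℕ => (cc ℓ m : ℝ) * Real.exp (-((m:ℝ)*t)))]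
  simp [cc_zero]
end

section
/- Let ℓ ≥ 1 be an integer, let α_1,…,α_ℓ be real numbers, and let β > 0 satisfy β > α_i for every i ∈ {1,…,ℓ}. Then for every t > 0 the series defining Z^{[ℓ]}_{α_1,…,α_ℓ}(t) converges and satisfies Z^{[ℓ]}_{α_1,…,α_ℓ}(t) ≤ t^{−β} · ζ(β+1−α_1)⋯ζ(β+1−α_ℓ) · β^β e^{−β}, where ζ is the Riemann zeta function; in particular Z^{[ℓ]}_{α_1,…,α_ℓ}(t) < ∞. -/
open Filter Topology Real MeasureTheory Asymptotics

theorem aux_exp (x β : ℝ) (hx : 0 < x) (hβ : 0 < β) :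
    Real.exp (-x) ≤ x ^ (-β) * (β ^ β * Real.exp (-β)) := by
  rw [Real.rpow_def_of_pos hx, Real.rpow_def_of_pos hβ, ← Real.exp_add, ← Real.exp_add]
  apply Real.exp_le_exp.mpr
  have h := Real.log_le_sub_one_of_pos (div_pos hx hβ)
  rw [Real.log_div hx.ne' hβ.ne'] at h
  have h2 := mul_le_mul_of_nonneg_left h hβ.le
  have h3 : β * (x / β - 1) = x - β := by field_simp
  nlinarith

theorem aux_zeta (s : ℝ) (hs : 1 < s) (F : Finset ℕ+) :
    ∑ d ∈ F, ((d : ℕ) : ℝ) ^ (-s) ≤ zetaR s := by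
  have hsum : Summable (fun m : ℕ => 1 / ((m : ℝ) + 1) ^ s) := by
    have := (summable_nat_add_iff 1).mpr (Real.summable_one_div_nat_rpow.mpr hs)
    simpa using this
  have e : ∑ d ∈ F, ((d : ℕ) : ℝ) ^ (-s)
      = ∑ m ∈ F.map Equiv.pnatEquivNat.toEmbedding, 1 / ((m : ℝ) + 1) ^ s := by
    rw [Finset.sum_map]
    refine Finset.sum_congr rfl fun d _ => ?_
    have h : ((PNat.natPred d : ℕ) : ℝ) + 1 = ((d : ℕ) : ℝ) := by
      exact_mod_cast PNat.natPred_add_one d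
    simp only [Equiv.coe_toEmbedding, Equiv.pnatEquivNat_apply]
    rw [h, Real.rpow_neg (by positivity), one_div]
  rw [e]
  exact hsum.sum_le_tsum _ (fun m _ => by positivity)

/-- basic bound. For real `α_i < β`, `β > 0`, `t > 0`, the series defining
`Z^{[ℓ]}_{α}(t)` converges, and is at most `t^{-β} ζ(β+1-α_1)⋯ζ(β+1-α_ℓ) β^β e^{-β}`. -/
theorem Zr_basic_bound (ℓ : ℕ) (hℓ : 1 ≤ ℓ) (α : Fin ℓ → ℝ) (β : ℝ)
    (hβ : 0 < β) (hβα : ∀ i, α i < β) (t : ℝ) (ht : 0 < t) :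
    Summable (fun δ : Fin ℓ → ℕ+ =>
      (∏ i, ((δ i : ℕ) : ℝ) ^ (α i - 1)) * Real.exp (-(∏ i, ((δ i : ℕ) : ℝ)) * t)) ∧
    Zr ℓ α t ≤
      t ^ (-β) * (∏ i, zetaR (β + 1 - α i)) * (β ^ β * Real.exp (-β)) := by
  have hpt : ∀ δ : Fin ℓ → ℕ+,
      (∏ i, ((δ i : ℕ) : ℝ) ^ (α i - 1)) * Real.exp (-(∏ i, ((δ i : ℕ) : ℝ)) * t) ≤
      (t ^ (-β) * (β ^ β * Real.exp (-β))) * ∏ i, ((δ i : ℕ) : ℝ) ^ (-(β + 1 - α i)) := by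
    intro δ
    have hd : ∀ i, (0 : ℝ) < ((δ i : ℕ) : ℝ) := fun i => by exact_mod_cast (δ i).pos
    have hP : 0 < ∏ i, ((δ i : ℕ) : ℝ) := Finset.prod_pos fun i _ => hd i
    have h1 := aux_exp ((∏ i, ((δ i : ℕ) : ℝ)) * t) β (by positivity) hβ
    rw [← neg_mul, Real.mul_rpow hP.le ht.le,
      ← Real.finsetProd_rpow _ _ (fun i _ => (hd i).le)] at h1
    have h2 : ∏ i, ((δ i : ℕ) : ℝ) ^ (-(β + 1 - α i)) =
        (∏ i, ((δ i : ℕ) : ℝ) ^ (α i - 1)) * ∏ i, ((δ i : ℕ) : ℝ) ^ (-β) := by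
      rw [← Finset.prod_mul_distrib]
      refine Finset.prod_congr rfl fun i _ => ?_
      rw [← Real.rpow_add (hd i)]
      congr 1
      ring
    rw [h2]
    refine (mul_le_mul_of_nonneg_left h1
      (Finset.prod_nonneg fun i _ => (Real.rpow_pos_of_pos (hd i) _).le)).trans_eq ?_
    ring
  have hnn : ∀ δ : Fin ℓ → ℕ+, 0 ≤
      (∏ i, ((δ i : ℕ) : ℝ) ^ (α i - 1)) * Real.exp (-(∏ i, ((δ i : ℕ) : ℝ)) * t) :=
    fun δ => by positivity
  have hfin : ∀ S : Finset (Fin ℓ → ℕ+), ∑ δ ∈ S,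
      (∏ i, ((δ i : ℕ) : ℝ) ^ (α i - 1)) * Real.exp (-(∏ i, ((δ i : ℕ) : ℝ)) * t) ≤
      t ^ (-β) * (∏ i, zetaR (β + 1 - α i)) * (β ^ β * Real.exp (-β)) := by
    classical
    intro S
    have hsub : S ⊆ Fintype.piFinset (fun i => S.image (fun δ => δ i)) := by
      intro δ hδ
      rw [Fintype.mem_piFinset]
      exact fun i => Finset.mem_image_of_mem (fun δ : Fin ℓ → ℕ+ => δ i) hδ
    have h1 : ∑ δ ∈ S, ∏ i, ((δ i : ℕ) : ℝ) ^ (-(β + 1 - α i)) ≤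
        ∏ i, zetaR (β + 1 - α i) := by
      refine (Finset.sum_le_sum_of_subset_of_nonneg hsub
        (fun δ _ _ => by positivity)).trans ?_
      rw [← Finset.prod_univ_sum (fun i => S.image (fun δ => δ i))
        (fun (i : Fin ℓ) (d : ℕ+) => ((d : ℕ) : ℝ) ^ (-(β + 1 - α i)))]
      refine Finset.prod_le_prod (fun i _ => Finset.sum_nonneg fun d _ => by positivity)
        (fun i _ => aux_zeta _ (by linarith [hβα i]) _)
    refine (Finset.sum_le_sum fun δ _ => hpt δ).trans ?_
    rw [← Finset.mul_sum]
    refine (mul_le_mul_of_nonneg_left h1 (by positivity)).trans_eq ?_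
    ring
  exact ⟨summable_of_sum_le hnn hfin, Real.tsum_le_of_sum_le hnn hfin⟩
end

section
/- Let ℓ ≥ 1 be an integer, let α_1,…,α_ℓ be complex numbers, and let β be a real number with β > max(0, Re α_1, …, Re α_ℓ). Then there exist constants c_1, c_2 > 0 such that for all t > 0, |Z^{[ℓ]}_{α_1,…,α_ℓ}(t)| ≤ c_1 · t^{−β} · e^{−c_2 t}. -/
open Filter Topology Real MeasureTheory Asymptotics

lemma summable_pi_prod_aux (n : ℕ) (f : Fin n → ℕ+ → ℝ) (h0 : ∀ i k, 0 ≤ f i k)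
    (hf : ∀ i, Summable (f i)) : Summable (fun δ : Fin n → ℕ+ => ∏ i, f i (δ i)) := by
  induction n with
  | zero => exact Summable.of_finite
  | succ n ih =>
    have h1 := ih (fun i => f i.succ) (fun i => h0 _) (fun i => hf _)
    have h2 := (hf 0).mul_of_nonneg h1 (fun k => h0 0 k)
      (fun δ => Finset.prod_nonneg fun i _ => h0 _ _)
    rw [← (Fin.consEquiv (fun _ : Fin (n+1) => ℕ+)).summable_iff]
    refine h2.congr fun p => ?_
    simp [Fin.consEquiv, Fin.prod_univ_succ]

lemma exp_aux (β : ℝ) (hβ : 0 < β) (x : ℝ) (hx : 0 < x) :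
    Real.exp (-(x / 2)) ≤ (2 * β) ^ β * x ^ (-β) := by
  have hy : 0 < x / (2 * β) := by positivity
  have h1 : (x / (2 * β)) ^ β ≤ Real.exp (x / 2) := by
    have h := Real.rpow_le_rpow hy.le
      (show x / (2 * β) ≤ Real.exp (x / (2 * β)) by
        linarith [Real.add_one_le_exp (x / (2 * β))]) hβ.le
    rw [← Real.exp_mul] at h
    convert h using 2
    field_simp
  rw [Real.div_rpow hx.le (by positivity)] at h1
  have hb : 0 < (2 * β) ^ β := by positivity
  have hxb : 0 < x ^ β := by positivity
  rw [Real.rpow_neg hx.le, Real.exp_neg, ← div_eq_mul_inv, inv_le_comm₀ (by positivity) (by positivity),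
    inv_div]
  exact h1

/-- for `β > max(0, Re α_1, …, Re α_ℓ)` there are `c₁, c₂ > 0` with
`|Z^{[ℓ]}_{α}(t)| ≤ c₁ t^{-β} e^{-c₂ t}` for all `t > 0`. -/
theorem Zc_decay_bound (ℓ : ℕ) (hℓ : 1 ≤ ℓ) (α : Fin ℓ → ℂ) (β : ℝ)
    (hβ0 : 0 < β) (hβα : ∀ i, (α i).re < β) :
    ∃ c₁ > (0 : ℝ), ∃ c₂ > (0 : ℝ), ∀ t : ℝ, 0 < t →
      ‖Zc ℓ α t‖ ≤ c₁ * t ^ (-β) * Real.exp (-c₂ * t) := by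
  set S : ℝ := ∑' δ : Fin ℓ → ℕ+, ∏ i, ((δ i : ℕ) : ℝ) ^ ((α i).re - 1 - β) with hS
  have hsum : Summable (fun δ : Fin ℓ → ℕ+ => ∏ i, ((δ i : ℕ) : ℝ) ^ ((α i).re - 1 - β)) := by
    refine summable_pi_prod_aux ℓ (fun i k => ((k : ℕ) : ℝ) ^ ((α i).re - 1 - β))
      (fun i k => by positivity) (fun i => ?_)
    have := (Real.summable_nat_rpow (p := (α i).re - 1 - β)).2 (by linarith [hβα i])
    exact this.comp_injective PNat.coe_injective
  have hS0 : 0 ≤ S := tsum_nonneg fun δ => Finset.prod_nonneg fun i _ => by positivity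
  refine ⟨(2 * β) ^ β * (S + 1), by positivity, 1 / 2, by norm_num, fun t ht => ?_⟩
  have key := tsum_of_norm_bounded
    (f := fun δ : Fin ℓ → ℕ+ => (∏ i, ((δ i : ℕ) : ℂ) ^ (α i - 1)) *
      Complex.exp (-(((∏ i, ((δ i : ℕ) : ℝ)) * t : ℝ) : ℂ)))
    (hsum.hasSum.mul_left ((2 * β) ^ β * t ^ (-β) * Real.exp (-(1 / 2) * t))) (fun δ => ?_)
  · refine key.trans ?_
    have : 0 ≤ (2 * β) ^ β * t ^ (-β) * Real.exp (-(1 / 2) * t) := by positivity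
    rw [← hS]
    nlinarith
  · have hpos : ∀ i, (0 : ℝ) < ((δ i : ℕ) : ℝ) := fun i => by exact_mod_cast (δ i).pos
    set P : ℝ := ∏ i, ((δ i : ℕ) : ℝ) with hP
    have hP1 : 1 ≤ P := by
      rw [hP]
      exact_mod_cast Nat.succ_le_of_lt (Finset.prod_pos fun i (_ : i ∈ Finset.univ) => (δ i).pos)
    have hP0 : 0 < P := by linarith
    have hnorm : ‖∏ i, ((δ i : ℕ) : ℂ) ^ (α i - 1)‖ = ∏ i, ((δ i : ℕ) : ℝ) ^ ((α i).re - 1) := by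
      rw [norm_prod]
      refine Finset.prod_congr rfl fun i _ => ?_
      rw [Complex.norm_natCast_cpow_of_pos (δ i).pos]
      simp
    have hsplit : ∏ i, ((δ i : ℕ) : ℝ) ^ ((α i).re - 1 - β)
        = (∏ i, ((δ i : ℕ) : ℝ) ^ ((α i).re - 1)) * P ^ (-β) := by
      rw [hP, ← Real.finsetProd_rpow _ _ (fun i _ => (hpos i).le), ← Finset.prod_mul_distrib]
      refine Finset.prod_congr rfl fun i _ => ?_
      rw [← Real.rpow_add (hpos i), sub_eq_add_neg _ β]
    have hexp : ‖Complex.exp (-((P * t : ℝ) : ℂ))‖ = Real.exp (-(P * t / 2)) * Real.exp (-(P * t / 2)) := by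
      rw [← Complex.ofReal_neg, Complex.norm_exp_ofReal, ← Real.exp_add]
      congr 1
      ring
    have h1 := exp_aux β hβ0 (P * t) (by positivity)
    rw [Real.mul_rpow hP0.le ht.le] at h1
    have h2 : Real.exp (-(P * t / 2)) ≤ Real.exp (-(1 / 2) * t) := by
      apply Real.exp_le_exp.2
      nlinarith
    have hA : 0 ≤ ∏ i, ((δ i : ℕ) : ℝ) ^ ((α i).re - 1) :=
      Finset.prod_nonneg fun i _ => by positivity
    rw [norm_mul, hnorm, hexp, hsplit]
    calc _ ≤ (∏ i, ((δ i : ℕ) : ℝ) ^ ((α i).re - 1)) *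
          (((2 * β) ^ β * (P ^ (-β) * t ^ (-β))) * Real.exp (-(1 / 2) * t)) := by
            gcongr
      _ = _ := by ring
end

section
/- Let f : (0,∞) → ℂ be a differentiable function and suppose there exist γ, c_1, c_2 > 0 such that for all t > 0, max(|f(t)|, t·|f'(t)|) ≤ c_1 · t^{γ−1} · e^{−c_2 t}. Then f is integrable on (0,∞), the series Σ_{δ=1}^{∞} f(δt) converges absolutely for all t > 0, and lim_{t → 0⁺} t · Σ_{δ=1}^{∞} f(δt) = ∫_{0}^{∞} f(u) du. -/
open Filter Topology Real MeasureTheory Asymptotics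

lemma aux_pow (γ T u v : ℝ) (hT : 0 ≤ T) (hu : 0 < u) (huv : u ≤ v) (hv : v ≤ u + T) :
    v ^ (γ - 1) ≤ (1 + T) ^ |γ - 1| * (u ^ (γ - 1) + 1) := by
  have hC : (1:ℝ) ≤ (1 + T) ^ |γ - 1| := Real.one_le_rpow (by linarith) (abs_nonneg _)
  have hup : 0 < u ^ (γ - 1) := Real.rpow_pos_of_pos hu _
  rcases le_total (γ - 1) 0 with h | h
  · have := Real.rpow_le_rpow_of_nonpos hu huv h
    nlinarith
  · rw [abs_of_nonneg h] at *
    rcases le_total u 1 with h1 | h1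
    · have : v ^ (γ - 1) ≤ (1 + T) ^ (γ - 1) :=
        Real.rpow_le_rpow (by linarith) (by linarith) h
      nlinarith
    · have : v ^ (γ - 1) ≤ ((1 + T) * u) ^ (γ - 1) :=
        Real.rpow_le_rpow (by linarith) (by nlinarith) h
      rw [Real.mul_rpow (by linarith) hu.le] at this
      nlinarith

lemma aux_int (γ c₁ c₂ C : ℝ) (hγ : 0 < γ) (hc₂ : 0 < c₂) :
    IntegrableOn (fun u : ℝ => c₁ * (C * (u ^ (γ - 1) + 1)) * Real.exp (-c₂ * u))
      (Set.Ioi 0) := by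
  have h1 := integrableOn_rpow_mul_exp_neg_mul_rpow (p := 1) (s := γ - 1) (b := c₂)
    (by linarith) (by norm_num) hc₂
  have h2 := integrableOn_rpow_mul_exp_neg_mul_rpow (p := 1) (s := 0) (b := c₂)
    (by linarith) (by norm_num) hc₂
  refine IntegrableOn.congr_fun ((h1.add h2).const_mul (c₁ * C)) ?_ measurableSet_Ioi
  intro u hu
  simp
  ring

lemma aux_ceil (t u : ℝ) (ht : 0 < t) (hu : 0 < u) :
    u ≤ (⌈u / t⌉₊ : ℝ) * t ∧ (⌈u / t⌉₊ : ℝ) * t ≤ u + t := by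
  have h1 := Nat.le_ceil (u / t)
  have h2 := (Nat.ceil_lt_add_one (div_pos hu ht).le).le
  constructor
  · rwa [div_le_iff₀ ht] at h1
  · have := mul_le_mul_of_nonneg_right h2 ht.le
    have h3 : (u / t + 1) * t = u + t := by field_simp
    linarith

lemma aux_dom (f : ℝ → ℂ) (γ c₁ c₂ : ℝ) (hc₁ : 0 < c₁) (hc₂ : 0 < c₂)
    (hb : ∀ t : ℝ, 0 < t → ‖f t‖ ≤ c₁ * t ^ (γ - 1) * Real.exp (-c₂ * t))
    (t T u : ℝ) (ht : 0 < t) (htT : t ≤ T) (hu : 0 < u) :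
    ‖f ((⌈u / t⌉₊ : ℝ) * t)‖ ≤
      c₁ * ((1 + T) ^ |γ - 1| * (u ^ (γ - 1) + 1)) * Real.exp (-c₂ * u) := by
  obtain ⟨h1, h2⟩ := aux_ceil t u ht hu
  refine (hb _ (by linarith)).trans ?_
  have h3 := aux_pow γ T u _ (by linarith) hu h1 (by linarith)
  have h4 : 0 ≤ (1 + T) ^ |γ - 1| * (u ^ (γ - 1) + 1) := by
    have : 0 ≤ 1 + T := by linarith
    positivity
  gcongr ?_ * ?_
  · gcongr
  · apply Real.exp_le_exp.2
    nlinarith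

lemma aux_sum {E : Type*} [NormedAddCommGroup E] [NormedSpace ℝ E] [CompleteSpace E]
    (g : ℝ → E) (t : ℝ) (ht : 0 < t)
    (hi : IntegrableOn (fun u : ℝ => g ((⌈u / t⌉₊ : ℝ) * t)) (Set.Ioi 0)) :
    HasSum (fun n : ℕ => t • g (((n + 1 : ℕ) : ℝ) * t))
      (∫ u in Set.Ioi (0:ℝ), g ((⌈u / t⌉₊ : ℝ) * t)) := by
  have hceil : ∀ (n : ℕ) (u : ℝ), u ∈ Set.Ioc ((n:ℝ) * t) (((n + 1 : ℕ) : ℝ) * t) ↔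
      ⌈u / t⌉₊ = n + 1 := by
    intro n u
    rw [Nat.ceil_eq_iff (by omega), Set.mem_Ioc, lt_div_iff₀ ht, div_le_iff₀ ht]
    simp
  have hU : (⋃ n : ℕ, Set.Ioc ((n:ℝ) * t) (((n + 1 : ℕ) : ℝ) * t)) = Set.Ioi 0 := by
    ext u
    simp only [Set.mem_iUnion, hceil, Set.mem_Ioi]
    constructor
    · rintro ⟨n, hn⟩
      have : 0 < ⌈u / t⌉₊ := by omega
      rw [Nat.ceil_pos] at this
      exact (div_pos_iff_of_pos_right ht).1 this
    · intro hu
      have : 0 < ⌈u / t⌉₊ := Nat.ceil_pos.2 (div_pos hu ht)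
      exact ⟨⌈u / t⌉₊ - 1, by omega⟩
  have := hasSum_integral_iUnion (μ := volume) (f := fun u : ℝ => g ((⌈u / t⌉₊ : ℝ) * t))
    (s := fun n : ℕ => Set.Ioc ((n:ℝ) * t) (((n + 1 : ℕ) : ℝ) * t))
    (fun n => measurableSet_Ioc) ?_ (by rw [hU]; exact hi)
  · rw [hU] at this
    convert this using 2 with n
    rw [setIntegral_congr_fun (g := fun _ => g (((n + 1 : ℕ) : ℝ) * t)) measurableSet_Ioc]
    · have : ((n:ℝ) + 1) * t - n * t = t := by ring
      simp [this, ht.le]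
    · intro u hu
      simp only [(hceil n u).1 hu]
  · intro m n hmn
    refine Set.disjoint_left.2 fun u hm hn => hmn ?_
    have h1 := (hceil m u).1 hm
    have h2 := (hceil n u).1 hn
    omega

/-- Euler–Maclaurin-type lemma. If `f : (0,∞) → ℂ` is differentiable and
`max(|f(t)|, t|f'(t)|) ≤ c₁ t^{γ-1} e^{-c₂ t}` for all `t > 0`, with `γ, c₁, c₂ > 0`, then `f`
is integrable on `(0,∞)`, `∑_{δ≥1} f(δt)` converges absolutely for all `t > 0`, and
`t ∑_{δ≥1} f(δt) → ∫_0^∞ f(u) du` as `t → 0⁺`. -/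
theorem euler_maclaurin_limit (f f' : ℝ → ℂ)
    (hderiv : ∀ t ∈ Set.Ioi (0 : ℝ), HasDerivAt f (f' t) t)
    (γ c₁ c₂ : ℝ) (hγ : 0 < γ) (hc₁ : 0 < c₁) (hc₂ : 0 < c₂)
    (hbound : ∀ t : ℝ, 0 < t →
      max ‖f t‖ (t * ‖f' t‖) ≤ c₁ * t ^ (γ - 1) * Real.exp (-c₂ * t)) :
    IntegrableOn f (Set.Ioi 0) ∧
    (∀ t : ℝ, 0 < t → Summable (fun δ : ℕ+ => ‖f ((δ : ℕ) * t)‖)) ∧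
    Tendsto (fun t : ℝ => (t : ℂ) * ∑' δ : ℕ+, f ((δ : ℕ) * t))
      (nhdsWithin 0 (Set.Ioi 0)) (nhds (∫ u in Set.Ioi (0 : ℝ), f u)) := by
  have hb : ∀ t : ℝ, 0 < t → ‖f t‖ ≤ c₁ * t ^ (γ - 1) * Real.exp (-c₂ * t) :=
    fun t ht => (le_max_left _ _).trans (hbound t ht)
  have hcont : ContinuousOn f (Set.Ioi 0) := fun t ht =>
    (hderiv t ht).continuousAt.continuousWithinAt
  have hmeas : ∀ t : ℝ, Measurable (fun u : ℝ => f ((⌈u / t⌉₊ : ℝ) * t)) := fun t =>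
    (measurable_from_nat (f := fun n : ℕ => f ((n : ℝ) * t))).comp
      (Nat.measurable_ceil.comp (measurable_id.div_const t))
  have hint : ∀ t : ℝ, 0 < t →
      IntegrableOn (fun u : ℝ => f ((⌈u / t⌉₊ : ℝ) * t)) (Set.Ioi 0) := by
    intro t ht
    refine Integrable.mono' (aux_int γ c₁ c₂ ((1 + t) ^ |γ - 1|) hγ hc₂)
      (hmeas t).aestronglyMeasurable ?_
    filter_upwards [ae_restrict_mem measurableSet_Ioi] with u hu
    exact aux_dom f γ c₁ c₂ hc₁ hc₂ hb t t u ht le_rfl hu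
  refine ⟨?_, ?_, ?_⟩
  · refine Integrable.mono' (aux_int γ c₁ c₂ 1 hγ hc₂)
      (hcont.aestronglyMeasurable measurableSet_Ioi) ?_
    filter_upwards [ae_restrict_mem measurableSet_Ioi] with u hu
    refine (hb u hu).trans ?_
    gcongr
    linarith
  · intro t ht
    have h := (aux_sum (fun x => ‖f x‖) t ht (hint t ht).norm).summable
    simp only [smul_eq_mul] at h
    rw [summable_mul_left_iff ht.ne'] at h
    exact (summable_pnat_iff_summable_succ (f := fun n : ℕ => ‖f ((n : ℝ) * t)‖)).2 h
  · have heq : ∀ t : ℝ, 0 < t → (∫ u in Set.Ioi (0:ℝ), f ((⌈u / t⌉₊ : ℝ) * t)) =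
        (t : ℂ) * ∑' δ : ℕ+, f ((δ : ℕ) * t) := by
      intro t ht
      rw [← (aux_sum f t ht (hint t ht)).tsum_eq,
        tsum_pnat_eq_tsum_succ (f := fun n : ℕ => f ((n : ℝ) * t)), ← tsum_mul_left]
      simp
    have hev : ∀ᶠ t : ℝ in nhdsWithin 0 (Set.Ioi 0), 0 < t ∧ t ≤ 1 := by
      filter_upwards [Ioc_mem_nhdsGT (zero_lt_one' ℝ)] with t ht using ht
    refine Tendsto.congr' (hev.mono fun t ht => heq t ht.1) ?_
    refine tendsto_integral_filter_of_dominated_convergence _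
      (Eventually.of_forall fun t => (hmeas t).aestronglyMeasurable) ?_
      (aux_int γ c₁ c₂ ((1 + 1) ^ |γ - 1|) hγ hc₂) ?_
    · filter_upwards [hev] with t ht
      filter_upwards [ae_restrict_mem measurableSet_Ioi] with u hu
      exact aux_dom f γ c₁ c₂ hc₁ hc₂ hb t 1 u ht.1 ht.2 hu
    · filter_upwards [ae_restrict_mem measurableSet_Ioi] with u hu
      refine (hderiv u hu).continuousAt.tendsto.comp ?_
      have h0 : Tendsto (fun t : ℝ => u + t) (nhdsWithin 0 (Set.Ioi 0)) (nhds u) := by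
        have : Tendsto (fun t : ℝ => u + t) (nhds 0) (nhds (u + 0)) :=
          (continuous_const.add continuous_id).tendsto 0
        rw [add_zero] at this
        exact this.mono_left nhdsWithin_le_nhds
      refine tendsto_of_tendsto_of_tendsto_of_le_of_le' tendsto_const_nhds h0 ?_ ?_
      · exact hev.mono fun t ht => (aux_ceil t u ht.1 hu).1
      · exact hev.mono fun t ht => (aux_ceil t u ht.1 hu).2
end

section
/- Let ℓ ≥ 1 be an integer and let α_1,…,α_ℓ be complex numbers with Re α_1 > Re α_2 ≥ ⋯ ≥ Re α_ℓ and Re α_1 > 0. Then, as t → 0⁺, Z^{[ℓ]}_{α_1,…,α_ℓ}(t) ~ Γ(α_1) · ζ(α_1+1−α_2) · ζ(α_1+1−α_3) ⋯ ζ(α_1+1−α_ℓ) · t^{−α_1}, where Γ is the Euler gamma function and ζ the Riemann zeta function (for ℓ = 1 the only hypothesis is Re α_1 > 0 and there are no zeta factors); here ~ means the ratio of the two sides tends to 1. -/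
open Filter Topology Real MeasureTheory Asymptotics

lemma zz_bound (σ : ℝ) (hσ : 0 < σ) : ∃ B : ℝ → ℝ, IntegrableOn B (Set.Ioi 0) ∧
    AntitoneOn B (Set.Ioi 0) ∧ ∀ y > 0, Real.exp (-y) * y ^ (σ - 1) ≤ B y := by
  obtain ⟨C, hC0, hC⟩ : ∃ C : ℝ, 0 ≤ C ∧ ∀ y > 0, y ^ (σ - min σ 1) ≤ C * Real.exp (y / 2) := by
    rcases (sub_nonneg.mpr (min_le_left σ 1)).eq_or_lt with h | h
    · refine ⟨1, zero_le_one, fun y hy => ?_⟩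
      rw [← h, Real.rpow_zero, one_mul]
      exact Real.one_le_exp (by positivity)
    · generalize σ - min σ 1 = p at h
      refine ⟨(2 * p) ^ p, by positivity, fun y hy => ?_⟩
      have h1 : y ≤ 2 * p * Real.exp (y / (2 * p)) := by
        have := Real.add_one_le_exp (y / (2 * p))
        have h2 : y / (2 * p) ≤ Real.exp (y / (2 * p)) := by linarith
        rw [div_le_iff₀ (by positivity)] at h2
        linarith
      calc y ^ p ≤ (2 * p * Real.exp (y / (2 * p))) ^ p := Real.rpow_le_rpow hy.le h1 h.le
        _ = _ := by
          rw [Real.mul_rpow (by positivity) (by positivity), ← Real.exp_mul]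
          congr 2
          field_simp
  have hτ : 0 < min σ 1 := lt_min hσ one_pos
  have hτ1 : min σ 1 ≤ 1 := min_le_right _ _
  refine ⟨fun y => C * (y ^ (min σ 1 - 1) * Real.exp (-(1/2) * y)), ?_, ?_, ?_⟩
  · have := integrableOn_rpow_mul_exp_neg_mul_rpow (p := 1) (s := min σ 1 - 1) (b := 1/2)
      (by linarith) one_pos (by norm_num)
    simp only [Real.rpow_one] at this
    exact this.const_mul C
  · intro x hx y hy hxy
    simp only [Set.mem_Ioi] at hx hy
    have : y ^ (min σ 1 - 1) ≤ x ^ (min σ 1 - 1) :=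
      Real.rpow_le_rpow_of_nonpos hx hxy (by linarith)
    have h2 : Real.exp (-(1/2) * y) ≤ Real.exp (-(1/2) * x) := Real.exp_le_exp.mpr (by linarith)
    dsimp only
    gcongr
  · intro y hy
    have e1 : y ^ (σ - 1) = y ^ (σ - min σ 1) * y ^ (min σ 1 - 1) := by
      rw [← Real.rpow_add hy]; congr 1; ring
    have e2 : Real.exp (-(1/2) * y) = Real.exp (-y) * Real.exp (y / 2) := by
      rw [← Real.exp_add]; congr 1; ring
    dsimp only
    rw [e1, e2]
    have := hC y hy
    calc _ ≤ Real.exp (-y) * (C * Real.exp (y / 2) * y ^ (min σ 1 - 1)) := by gcongr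
      _ = _ := by ring

lemma zz_floor (t x : ℝ) (ht : 0 < t) (hx : 0 < x) :
    x ≤ t * ((⌊x / t⌋₊ : ℝ) + 1) ∧ t * ((⌊x / t⌋₊ : ℝ) + 1) ≤ x + t := by
  constructor
  · have := (Nat.lt_floor_add_one (x / t)).le
    rw [div_le_iff₀ ht] at this
    linarith
  · have := Nat.floor_le (div_nonneg hx.le ht.le)
    rw [le_div_iff₀ ht] at this
    linarith

lemma zz_step {E : Type*} [NormedAddCommGroup E] [NormedSpace ℝ E] [CompleteSpace E]
    [MeasurableSpace E] [BorelSpace E] [SecondCountableTopology E]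
    (h : ℝ → E) (B : ℝ → ℝ) (hB : IntegrableOn B (Set.Ioi 0)) (hBa : AntitoneOn B (Set.Ioi 0))
    (hh : ∀ y > 0, ‖h y‖ ≤ B y) (t : ℝ) (ht : 0 < t) :
    AEStronglyMeasurable (fun x : ℝ => h (t * ((⌊x / t⌋₊ : ℝ) + 1))) (volume.restrict (Set.Ioi 0)) ∧
    (∀ x > 0, ‖h (t * ((⌊x / t⌋₊ : ℝ) + 1))‖ ≤ B x) ∧
    HasSum (fun n : ℕ => t • h (t * ((n : ℝ) + 1)))
      (∫ x in Set.Ioi (0 : ℝ), h (t * ((⌊x / t⌋₊ : ℝ) + 1))) := by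
  have hm : Measurable (fun x : ℝ => h (t * ((⌊x / t⌋₊ : ℝ) + 1))) := by
    have h1 : Measurable (fun n : ℕ => h (t * ((n : ℝ) + 1))) := measurable_from_nat
    exact h1.comp (Nat.measurable_floor.comp (measurable_id.div_const t))
  have hb : ∀ x > 0, ‖h (t * ((⌊x / t⌋₊ : ℝ) + 1))‖ ≤ B x := by
    intro x hx
    have h1 := (zz_floor t x ht hx).1
    have h2 : 0 < t * ((⌊x / t⌋₊ : ℝ) + 1) := by positivity
    exact (hh _ h2).trans (hBa hx h2 h1)
  have hi : IntegrableOn (fun x : ℝ => h (t * ((⌊x / t⌋₊ : ℝ) + 1))) (Set.Ioi 0) := by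
    refine Integrable.mono' hB hm.aestronglyMeasurable ?_
    filter_upwards [ae_restrict_mem measurableSet_Ioi] with x hx using hb x hx
  refine ⟨hm.aestronglyMeasurable, hb, ?_⟩
  have hU : (⋃ n : ℕ, Set.Ico (t * (n : ℝ)) (t * ((n : ℝ) + 1))) = Set.Ici 0 := by
    ext x
    simp only [Set.mem_iUnion, Set.mem_Ico, Set.mem_Ici]
    constructor
    · rintro ⟨n, h1, -⟩
      exact le_trans (by positivity) h1
    · intro hx
      refine ⟨⌊x / t⌋₊, ?_, ?_⟩
      · have := Nat.floor_le (div_nonneg hx ht.le)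
        rw [le_div_iff₀ ht] at this
        linarith
      · have := (Nat.lt_floor_add_one (x / t))
        rw [div_lt_iff₀ ht] at this
        linarith
  have hfl : ∀ n : ℕ, ∀ x ∈ Set.Ico (t * (n : ℝ)) (t * ((n : ℝ) + 1)), ⌊x / t⌋₊ = n := by
    rintro n x ⟨h1, h2⟩
    have hx : 0 ≤ x := le_trans (by positivity) h1
    rw [Nat.floor_eq_iff (div_nonneg hx ht.le), le_div_iff₀ ht, div_lt_iff₀ ht]
    constructor <;> linarith
  have key := hasSum_integral_iUnion (μ := volume)
    (s := fun n : ℕ => Set.Ico (t * (n : ℝ)) (t * ((n : ℝ) + 1)))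
    (f := fun x : ℝ => h (t * ((⌊x / t⌋₊ : ℝ) + 1))) (fun n => measurableSet_Ico) ?_ ?_
  · rw [hU, integral_Ici_eq_integral_Ioi] at key
    convert key using 2 with n
    rw [setIntegral_congr_fun (g := fun _ => h (t * ((n : ℝ) + 1))) measurableSet_Ico
      (fun x hx => by simp only [hfl n x hx])]
    rw [setIntegral_const]
    congr 1
    rw [Measure.real, Real.volume_Ico, ENNReal.toReal_ofReal] <;> nlinarith
  · intro m n hmn
    rw [Function.onFun, Set.disjoint_left]
    intro x h1 h2
    exact hmn ((hfl m x h1).symm.trans (hfl n x h2))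
  · rw [hU, integrableOn_Ici_iff_integrableOn_Ioi]
    exact hi

lemma zz_base (a : ℂ) (ha : 0 < a.re) : ∃ C : ℝ,
    (∀ t : ℝ, 0 < t → Summable (fun n : ℕ+ => ‖((n : ℕ) : ℂ) ^ (a - 1) *
        Complex.exp (-((((n : ℕ) : ℝ) * t : ℝ) : ℂ))‖) ∧
      ∑' n : ℕ+, ‖((n : ℕ) : ℂ) ^ (a - 1) *
        Complex.exp (-((((n : ℕ) : ℝ) * t : ℝ) : ℂ))‖ ≤ C * t ^ (-a.re)) ∧
    Tendsto (fun t : ℝ => (t : ℂ) ^ a * ∑' n : ℕ+, ((n : ℕ) : ℂ) ^ (a - 1) *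
        Complex.exp (-((((n : ℕ) : ℝ) * t : ℝ) : ℂ))) (𝓝[>] 0) (𝓝 (Complex.Gamma a)) := by
  obtain ⟨B, hB, hBa, hBb⟩ := zz_bound a.re ha
  set h : ℝ → ℂ := fun y => (Real.exp (-y) : ℂ) * (y : ℂ) ^ (a - 1) with hdef
  have hn : ∀ y > 0, ‖h y‖ ≤ B y := by
    intro y hy
    rw [hdef]
    simp only [norm_mul, Complex.norm_real, Complex.norm_cpow_eq_rpow_re_of_pos hy]
    rw [Real.norm_of_nonneg (Real.exp_pos _).le]
    simpa using hBb y hy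
  -- rewriting of the terms
  have hterm : ∀ t : ℝ, 0 < t → ∀ n : ℕ, (t : ℂ) ^ a * (((n + 1 : ℕ) : ℂ) ^ (a - 1) *
        Complex.exp (-((((n + 1 : ℕ) : ℝ) * t : ℝ) : ℂ))) = t • h (t * ((n : ℝ) + 1)) := by
    intro t ht n
    have h1 : (t : ℂ) ^ a = t * (t : ℂ) ^ (a - 1) := by
      rw [Complex.cpow_sub _ _ (by exact_mod_cast ht.ne'), Complex.cpow_one]
      field_simp [show (t : ℂ) ≠ 0 by exact_mod_cast ht.ne']
    have h2 : ((t * ((n : ℝ) + 1) : ℝ) : ℂ) ^ (a - 1) =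
        (t : ℂ) ^ (a - 1) * ((n + 1 : ℕ) : ℂ) ^ (a - 1) := by
      rw [Complex.ofReal_mul, Complex.mul_cpow_ofReal_nonneg ht.le (by positivity)]
      push_cast; rfl
    simp only [hdef, Complex.real_smul, h2, h1, Complex.ofReal_exp]
    push_cast
    rw [show -(((n : ℂ) + 1) * t) = -(t * ((n : ℂ) + 1)) by ring]
    ring
  have hS : ∀ t : ℝ, 0 < t → (t : ℂ) ^ a * ∑' n : ℕ+, ((n : ℕ) : ℂ) ^ (a - 1) *
        Complex.exp (-((((n : ℕ) : ℝ) * t : ℝ) : ℂ)) =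
        ∫ x in Set.Ioi (0 : ℝ), h (t * ((⌊x / t⌋₊ : ℝ) + 1)) := by
    intro t ht
    rw [tsum_pnat_eq_tsum_succ (f := fun n : ℕ => ((n : ℕ) : ℂ) ^ (a - 1) *
        Complex.exp (-((((n : ℕ) : ℝ) * t : ℝ) : ℂ))), ← tsum_mul_left,
        tsum_congr (hterm t ht)]
    exact (zz_step h B hB hBa hn t ht).2.2.tsum_eq
  refine ⟨∫ x in Set.Ioi (0 : ℝ), B x, ?_, ?_⟩
  · intro t ht
    obtain ⟨s1, s2, s3⟩ := zz_step (fun y => ‖h y‖) B hB hBa (by simpa using hn) t ht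
    have e : ∀ n : ℕ, ‖((n + 1 : ℕ) : ℂ) ^ (a - 1) *
        Complex.exp (-((((n + 1 : ℕ) : ℝ) * t : ℝ) : ℂ))‖ =
        t ^ (-a.re) * (t • ‖h (t * ((n : ℝ) + 1))‖) := by
      intro n
      have := congrArg norm (hterm t ht n)
      rw [norm_smul, Real.norm_of_nonneg ht.le, norm_mul,
        Complex.norm_cpow_eq_rpow_re_of_pos ht] at this
      rw [smul_eq_mul, ← this, ← mul_assoc, ← Real.rpow_add ht]
      simp
    have s4 := s3.mul_left (t ^ (-a.re))
    simp_rw [← e] at s4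
    constructor
    · rw [summable_pnat_iff_summable_succ (f := fun n : ℕ => ‖((n : ℕ) : ℂ) ^ (a - 1) *
        Complex.exp (-((((n : ℕ) : ℝ) * t : ℝ) : ℂ))‖)]
      exact s4.summable
    · rw [tsum_pnat_eq_tsum_succ (f := fun n : ℕ => ‖((n : ℕ) : ℂ) ^ (a - 1) *
        Complex.exp (-((((n : ℕ) : ℝ) * t : ℝ) : ℂ))‖), s4.tsum_eq, mul_comm]
      refine mul_le_mul_of_nonneg_right ?_ (by positivity)
      refine integral_mono_of_nonneg (ae_of_all _ fun x => norm_nonneg (h (t * ((⌊x / t⌋₊ : ℝ) + 1)))) hB ?_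
      filter_upwards [ae_restrict_mem measurableSet_Ioi] with x hx
      simpa using s2 x hx
  · rw [Complex.Gamma_eq_integral ha, Complex.GammaIntegral]
    have : Tendsto (fun t : ℝ => ∫ x in Set.Ioi (0 : ℝ), h (t * ((⌊x / t⌋₊ : ℝ) + 1))) (𝓝[>] 0)
        (𝓝 (∫ x in Set.Ioi (0 : ℝ), h x)) := by
      refine tendsto_integral_filter_of_dominated_convergence B ?_ ?_ hB ?_
      · filter_upwards [self_mem_nhdsWithin] with t ht
        exact (zz_step h B hB hBa hn t ht).1
      · filter_upwards [self_mem_nhdsWithin] with t ht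
        filter_upwards [ae_restrict_mem measurableSet_Ioi] with x hx
        exact (zz_step h B hB hBa hn t ht).2.1 x hx
      · filter_upwards [ae_restrict_mem measurableSet_Ioi] with x hx
        have hx : 0 < x := hx
        have hc : ContinuousAt h x := by
          apply ContinuousAt.mul
          · fun_prop
          · exact (continuousAt_cpow_const (by simp [Complex.slitPlane, hx])).comp
              Complex.continuous_ofReal.continuousAt
        refine hc.tendsto.comp ?_
        refine tendsto_of_tendsto_of_tendsto_of_le_of_le' (g := fun _ => x) (h := fun t => x + t)
          tendsto_const_nhds ?_ ?_ ?_
        · have : Tendsto (fun t : ℝ => x + t) (𝓝 0) (𝓝 (x + 0)) :=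
            (continuous_const.add continuous_id).tendsto 0
          rw [add_zero] at this
          exact this.mono_left nhdsWithin_le_nhds
        · filter_upwards [self_mem_nhdsWithin] with t ht using (zz_floor t x ht hx).1
        · filter_upwards [self_mem_nhdsWithin] with t ht using (zz_floor t x ht hx).2
    refine Tendsto.congr' ?_ this
    filter_upwards [self_mem_nhdsWithin] with t ht using (hS t ht).symm

lemma zz_pi (m : ℕ) (f : Fin m → ℕ+ → ℂ) (hf : ∀ i, Summable (fun n => ‖f i n‖)) :
    Summable (fun δ : Fin m → ℕ+ => ‖∏ i, f i (δ i)‖) ∧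
    ∑' δ : Fin m → ℕ+, ∏ i, f i (δ i) = ∏ i, ∑' n, f i n := by
  induction m with
  | zero => simp [Summable.of_finite]
  | succ m ih =>
    obtain ⟨i1, i2⟩ := ih (fun i => f i.succ) (fun i => hf _)
    have hp : ∀ p : ℕ+ × (Fin m → ℕ+), ∏ i, f i (Fin.consEquiv (fun _ : Fin (m+1) => ℕ+) p i) =
        f 0 p.1 * ∏ i : Fin m, f i.succ (p.2 i) := by
      intro p
      rw [Fin.prod_univ_succ]
      simp
    constructor
    · rw [← (Fin.consEquiv (fun _ : Fin (m+1) => ℕ+)).summable_iff]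
      refine (summable_congr fun p => ?_).mpr
        (Summable.mul_norm (f := f 0) (g := fun d : Fin m → ℕ+ => ∏ i : Fin m, f i.succ (d i))
          (hf 0) i1)
      exact congrArg norm (hp p)
    · rw [← (Fin.consEquiv (fun _ : Fin (m+1) => ℕ+)).tsum_eq, tsum_congr hp,
        Fin.prod_univ_succ, ← i2]
      exact (tsum_mul_tsum_of_summable_norm (f := f 0)
        (g := fun d : Fin m → ℕ+ => ∏ i : Fin m, f i.succ (d i)) (hf 0) i1).symm

lemma zz_main (m : ℕ) (α : Fin (m + 1) → ℂ) (h0 : 0 < (α 0).re)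
    (hs : ∀ i : Fin m, (α i.succ).re < (α 0).re) :
    Tendsto (fun t : ℝ => (t : ℂ) ^ (α 0) * Zc (m + 1) α t) (𝓝[>] 0)
      (𝓝 (Complex.Gamma (α 0) * ∏ i : Fin m, riemannZeta (α 0 + 1 - α i.succ))) := by
  set a := α 0 with hadef
  obtain ⟨C, hC, hlim⟩ := zz_base a h0
  set b : ℕ+ → ℝ → ℂ := fun n s => ((n : ℕ) : ℂ) ^ (a - 1) *
        Complex.exp (-((((n : ℕ) : ℝ) * s : ℝ) : ℂ)) with hb
  set c : (Fin m → ℕ+) → ℂ := fun d => ∏ i, ((d i : ℕ) : ℂ) ^ (α i.succ - 1) with hc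
  set P : (Fin m → ℕ+) → ℝ := fun d => ∏ i, ((d i : ℕ) : ℝ) with hP
  set w : (Fin m → ℕ+) → ℂ := fun d => ∏ i, ((d i : ℕ) : ℂ) ^ (α i.succ - 1 - a) with hw
  have hPpos : ∀ d, 0 < P d := fun d => Finset.prod_pos fun i _ => by
    exact_mod_cast (d i).pos
  have hwc : ∀ d, c d = w d * (P d : ℂ) ^ a := by
    intro d
    have : (P d : ℂ) ^ a = ∏ i, ((d i : ℕ) : ℂ) ^ a := by
      have := fun s : Finset (Fin m) => show ((∏ i ∈ s, ((d i : ℕ) : ℝ) : ℝ) : ℂ) ^ a =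
          ∏ i ∈ s, ((d i : ℕ) : ℂ) ^ a from by
        induction s using Finset.induction_on with
        | empty => simp
        | insert j s hj ih =>
          rw [Finset.prod_insert hj, Finset.prod_insert hj, ← ih, Complex.ofReal_mul,
            Complex.mul_cpow_ofReal_nonneg (by positivity)
              (Finset.prod_nonneg fun i _ => by positivity)]
          simp
      exact this Finset.univ
    rw [this]
    simp only [hc, hw]
    rw [← Finset.prod_mul_distrib]
    refine Finset.prod_congr rfl fun i _ => ?_
    rw [← Complex.cpow_add _ _ (by exact_mod_cast (d i).pos.ne')]
    congr 1; ring
  have hre : ∀ i : Fin m, 1 < (a + 1 - α i.succ).re := by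
    intro i
    have := hs i
    simp only [Complex.sub_re, Complex.add_re, Complex.one_re]
    linarith
  have hterm : ∀ (i : Fin m) (n : ℕ), ((n : ℂ)) ^ (α i.succ - 1 - a) =
      1 / (n : ℂ) ^ (a + 1 - α i.succ) := by
    intro i n
    rw [one_div, ← Complex.cpow_neg]
    congr 1; ring
  obtain ⟨hws, hwt⟩ := zz_pi m (fun i n => ((n : ℕ) : ℂ) ^ (α i.succ - 1 - a)) (by
    intro i
    have := (Complex.summable_one_div_nat_cpow.mpr (hre i)).norm
    simp_rw [← hterm] at this
    exact this.comp_injective PNat.coe_injective)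
  have hwt' : ∑' d, w d = ∏ i : Fin m, riemannZeta (a + 1 - α i.succ) := by
    rw [hw, hwt]
    refine Finset.prod_congr rfl fun i _ => ?_
    rw [zeta_eq_tsum_one_div_nat_add_one_cpow (hre i)]
    rw [tsum_pnat_eq_tsum_succ (f := fun n : ℕ => (n : ℂ) ^ (α i.succ - 1 - a))]
    refine tsum_congr fun n => ?_
    rw [hterm]; push_cast; rfl
  -- norm bound
  have hg : ∀ s : ℝ, 0 < s → ‖(s : ℂ) ^ a * ∑' n, b n s‖ ≤ C := by
    intro s hspos
    rw [norm_mul, Complex.norm_cpow_eq_rpow_re_of_pos hspos]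
    calc s ^ a.re * ‖∑' n, b n s‖ ≤ s ^ a.re * (C * s ^ (-a.re)) := by
          gcongr
          exact (norm_tsum_le_tsum_norm (hC s hspos).1).trans (hC s hspos).2
      _ = C * (s ^ a.re * s ^ (-a.re)) := by ring
      _ = C := by rw [← Real.rpow_add hspos]; simp
  let e : (Fin m → ℕ+) × ℕ+ ≃ (Fin (m + 1) → ℕ+) :=
    (Equiv.prodComm _ _).trans (Fin.consEquiv (fun _ : Fin (m+1) => ℕ+))
  have hZ : ∀ t : ℝ, 0 < t →
      (t : ℂ) ^ a * Zc (m + 1) α t = ∑' d, w d * (((t * P d : ℝ) : ℂ) ^ a * ∑' n, b n (t * P d)) := by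
    intro t ht
    have h1 : Zc (m + 1) α t = ∑' p : (Fin m → ℕ+) × ℕ+, c p.1 * b p.2 (t * P p.1) := by
      rw [Zc, ← e.tsum_eq]
      refine tsum_congr fun p => ?_
      rw [Fin.prod_univ_succ, Fin.prod_univ_succ]
      simp only [e, hc, hb, hP, Equiv.trans_apply, Equiv.prodComm_apply, Fin.consEquiv_apply,
        Fin.cons_zero, Fin.cons_succ, Prod.fst_swap, Prod.snd_swap]
      rw [show ∀ x y z : ℝ, x * y * z = x * (z * y) from fun x y z => by ring]
      ring
    have hsn : ∀ d, Summable fun n => ‖c d * b n (t * P d)‖ := by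
      intro d
      simp_rw [norm_mul (c d)]
      exact (hC _ (mul_pos ht (hPpos d))).1.mul_left _
    have hsum : Summable fun p : (Fin m → ℕ+) × ℕ+ => ‖c p.1 * b p.2 (t * P p.1)‖ := by
      rw [summable_prod_of_nonneg (fun p => norm_nonneg _)]
      refine ⟨hsn, ?_⟩
      refine Summable.of_nonneg_of_le (fun d => tsum_nonneg fun n => norm_nonneg _) (fun d => ?_)
        (hws.mul_left (C * t ^ (-a.re)))
      simp_rw [norm_mul (c d)]
      rw [tsum_mul_left]
      have hp := hPpos d
      calc ‖c d‖ * ∑' n, ‖b n (t * P d)‖ ≤ ‖c d‖ * (C * (t * P d) ^ (-a.re)) := by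
            gcongr
            exact (hC _ (mul_pos ht hp)).2
        _ = C * t ^ (-a.re) * ‖w d‖ * (P d ^ a.re * P d ^ (-a.re)) := by
            rw [hwc, norm_mul, Complex.norm_cpow_eq_rpow_re_of_pos hp,
              Real.mul_rpow ht.le hp.le]
            ring
        _ = C * t ^ (-a.re) * ‖w d‖ := by rw [← Real.rpow_add hp]; simp
        _ ≤ _ := le_rfl
    rw [h1, Summable.tsum_prod' hsum.of_norm (fun d => (hsn d).of_norm), ← tsum_mul_left]
    refine tsum_congr fun d => ?_
    dsimp only
    rw [tsum_mul_left, hwc, Complex.ofReal_mul,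
      Complex.mul_cpow_ofReal_nonneg ht.le (hPpos d).le]
    ring
  have hT : Tendsto (fun t : ℝ =>
      ∑' d, w d * (((t * P d : ℝ) : ℂ) ^ a * ∑' n, b n (t * P d))) (𝓝[>] 0)
      (𝓝 (∑' d, w d * Complex.Gamma a)) := by
    refine tendsto_tsum_of_dominated_convergence (bound := fun d => ‖w d‖ * C)
      (hws.mul_right C) (fun d => ?_) ?_
    · refine Tendsto.const_mul _ (hlim.comp (f := fun t : ℝ => t * P d) ?_)
      refine tendsto_nhdsWithin_iff.mpr ⟨?_, ?_⟩
      · have : Tendsto (fun t : ℝ => t * P d) (𝓝 0) (𝓝 (0 * P d)) :=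
          (continuous_id.mul continuous_const).tendsto 0
        rw [zero_mul] at this
        exact this.mono_left nhdsWithin_le_nhds
      · filter_upwards [self_mem_nhdsWithin] with t ht using mul_pos ht (hPpos d)
    · filter_upwards [self_mem_nhdsWithin] with t ht d
      rw [norm_mul]
      gcongr
      exact hg _ (mul_pos ht (hPpos d))
  rw [tsum_mul_right, hwt', mul_comm] at hT
  refine hT.congr' ?_
  filter_upwards [self_mem_nhdsWithin] with t ht using (hZ t ht).symm

/-- if `Re α_1 > Re α_2 ≥ ⋯ ≥ Re α_ℓ` and `Re α_1 > 0`, then as `t → 0⁺`,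
`Z^{[ℓ]}_{α}(t) ~ Γ(α_1) ζ(α_1+1-α_2)⋯ζ(α_1+1-α_ℓ) t^{-α_1}`. -/
theorem Zc_asymptotic (ℓ : ℕ) (hℓ : 1 ≤ ℓ) (α : Fin ℓ → ℂ)
    (h0 : 0 < (α ⟨0, hℓ⟩).re)
    (hstrict : ∀ i : Fin ℓ, i ≠ ⟨0, hℓ⟩ → (α i).re < (α ⟨0, hℓ⟩).re)
    (hmono : ∀ i j : Fin ℓ, i ≠ ⟨0, hℓ⟩ → i ≤ j → (α j).re ≤ (α i).re) :
    Tendsto (fun t : ℝ =>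
        Zc ℓ α t /
          (Complex.Gamma (α ⟨0, hℓ⟩) *
            (∏ i ∈ Finset.univ.erase (⟨0, hℓ⟩ : Fin ℓ),
              riemannZeta (α ⟨0, hℓ⟩ + 1 - α i)) *
            (t : ℂ) ^ (-α ⟨0, hℓ⟩)))
      (nhdsWithin 0 (Set.Ioi 0)) (nhds 1) := by
  obtain ⟨m, rfl⟩ : ∃ m, ℓ = m + 1 := ⟨ℓ - 1, by omega⟩
  have e0 : (⟨0, hℓ⟩ : Fin (m + 1)) = 0 := rfl
  rw [e0] at *
  have hs : ∀ i : Fin m, (α i.succ).re < (α 0).re := fun i => hstrict _ (Fin.succ_ne_zero i)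
  have hprod : ∏ i ∈ Finset.univ.erase (0 : Fin (m + 1)), riemannZeta (α 0 + 1 - α i) =
      ∏ i : Fin m, riemannZeta (α 0 + 1 - α i.succ) := by
    rw [Fin.univ_succ, Finset.cons_eq_insert, Finset.erase_insert (by simp), Finset.prod_map]
    rfl
  rw [hprod]
  have hne : Complex.Gamma (α 0) * ∏ i : Fin m, riemannZeta (α 0 + 1 - α i.succ) ≠ 0 := by
    refine mul_ne_zero (Complex.Gamma_ne_zero_of_re_pos h0) (Finset.prod_ne_zero_iff.mpr ?_)
    intro i _
    apply riemannZeta_ne_zero_of_one_lt_re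
    have := hs i
    simp only [Complex.sub_re, Complex.add_re, Complex.one_re]
    linarith
  have key := (zz_main m α h0 hs).div_const
    (Complex.Gamma (α 0) * ∏ i : Fin m, riemannZeta (α 0 + 1 - α i.succ))
  rw [div_self hne] at key
  refine key.congr' ?_
  filter_upwards [self_mem_nhdsWithin] with t ht
  have ht0 : (t : ℂ) ≠ 0 := by
    have : (0 : ℝ) < t := ht
    exact_mod_cast this.ne'
  rw [Complex.cpow_neg, ← div_div (Zc (m + 1) α t), div_inv_eq_mul]
  ring
end
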